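/- arXiv:2107.05486 — 4 statements merged into one kernel-verified Lean document; each statement's English description precedes it below -/
import Mathlib

section
/- Let q, K ≥ 2 be integers. Then for all integers Δ > K·q^{K−1}·ln q + 1, there exists a K-uniform simple hypergraph H of maximum degree at most Δ that admits a proper q-colouring, together with two distinct vertices u, v of H such that the degree of u is 1, the degree of v is at most Δ, and every proper q-colouring σ of H satisfies σ(u) ≠ σ(v). -/
/-- The degree of a vertex `v` in a hypergraph with hyperedge set `E`:
the number of hyperedges containing `v`. -/
def hypDegree (E : Finset (Finset ℕ)) (v : ℕ) : ℕ :=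
  (E.filter (fun e => v ∈ e)).card

/-- A proper `q`-colouring: no hyperedge is monochromatic. -/
def ProperColouring (q : ℕ) (E : Finset (Finset ℕ)) (σ : ℕ → Fin q) : Prop :=
  ∀ e ∈ E, ¬ ∀ u ∈ e, ∀ w ∈ e, σ u = σ w

namespace HypAux
open Finset

/-- Vertices equal to `x` or sharing an edge with `x`. -/
def nbr (E : Finset (Finset ℕ)) (x : ℕ) : Finset ℕ :=
  insert x ((E.filter (fun e => x ∈ e)).biUnion id)

lemma nbr_card (E : Finset (Finset ℕ)) (K Δ : ℕ) (hE : ∀ e ∈ E, e.card = K)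
    (hd : ∀ w, hypDegree E w ≤ Δ) (x : ℕ) : (nbr E x).card ≤ Δ * K + 1 := by
  unfold nbr
  refine (card_insert_le _ _).trans ?_
  gcongr
  refine (card_biUnion_le_card_mul _ _ K ?_).trans ?_
  · intro e he
    exact (hE e (mem_filter.1 he).1).le
  · exact Nat.mul_le_mul_right _ (hd x)

/-- tuples with a given bad pair -/
lemma bad_pair_card (K : ℕ) (U : Finset ℕ) (N : ℕ → Finset ℕ) (D : ℕ)
    (hN : ∀ x, (N x).card ≤ D) (i j : Fin K) (hij : i ≠ j) :
    ((Fintype.piFinset (fun _ : Fin K => U)).filter (fun f => f j ∈ N (f i))).card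
      ≤ D * U.card ^ (K - 1) := by
  classical
  let r : (Fin K → ℕ) → ({k : Fin K // k ≠ j} → ℕ) := fun f k => f k
  have hmap : ∀ f ∈ (Fintype.piFinset (fun _ : Fin K => U)).filter (fun f => f j ∈ N (f i)),
      r f ∈ Fintype.piFinset (fun _ : {k : Fin K // k ≠ j} => U) := by
    intro f hf
    rw [mem_filter, Fintype.mem_piFinset] at hf
    rw [Fintype.mem_piFinset]
    exact fun k => hf.1 k
  have := card_le_mul_card_image_of_maps_to hmap D ?_
  · refine this.trans ?_
    rw [Fintype.card_piFinset]
    simp [Fintype.card_subtype_compl]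
  · intro g _
    refine le_trans ?_ (hN (g ⟨i, hij⟩))
    refine card_le_card_of_injOn (fun f => f j) ?_ ?_
    · intro f hf
      simp only [coe_filter, mem_filter, Set.mem_ofPred_eq] at hf
      have h2 := hf.1.2
      rw [← hf.2]
      exact h2
    · intro f hf f' hf' h
      simp only [coe_filter, mem_filter, Set.mem_ofPred_eq] at hf hf'
      funext k
      by_cases hk : k = j
      · subst hk; exact h
      · have := congrFun (hf.2.trans hf'.2.symm) ⟨k, hk⟩
        exact this

/-- tuples with no bad pair -/
def goodT (K : ℕ) (U : Finset ℕ) (N : ℕ → Finset ℕ) : Finset (Fin K → ℕ) :=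
  (Fintype.piFinset (fun _ : Fin K => U)).filter (fun f => ∀ i j, i ≠ j → f j ∉ N (f i))

lemma bad_card (K : ℕ) (U : Finset ℕ) (N : ℕ → Finset ℕ) (D : ℕ)
    (hN : ∀ x, (N x).card ≤ D) :
    ((Fintype.piFinset (fun _ : Fin K => U)) \ goodT K U N).card
      ≤ K * K * (D * U.card ^ (K - 1)) := by
  classical
  have hsub : ((Fintype.piFinset (fun _ : Fin K => U)) \ goodT K U N) ⊆
      ((univ : Finset (Fin K × Fin K)).filter (fun p => p.1 ≠ p.2)).biUnion
      (fun p => (Fintype.piFinset (fun _ : Fin K => U)).filter (fun f => f p.2 ∈ N (f p.1))) := by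
    intro f hf
    simp only [goodT, mem_sdiff, mem_filter, not_and, not_forall, not_not] at hf
    obtain ⟨h1, h2⟩ := hf
    obtain ⟨i, j, hij, h⟩ := h2 h1
    simp only [mem_biUnion, mem_filter, mem_univ, true_and]
    exact ⟨(i, j), hij, h1, h⟩
  refine (card_le_card hsub).trans ?_
  refine (card_biUnion_le_card_mul _ _ (D * U.card ^ (K - 1)) ?_).trans ?_
  · intro p hp
    exact bad_pair_card K U N D hN p.1 p.2 (mem_filter.1 hp).2
  · refine Nat.mul_le_mul_right _ ?_
    refine (card_filter_le _ _).trans ?_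
    simp

lemma mono_card (q K : ℕ) (hq : 2 ≤ q) (hK : 2 ≤ K) (U : Finset ℕ) (σ : ℕ → Fin q) :
    ((U.card : ℝ) ^ K / (q : ℝ) ^ (K - 1)) ≤
    (((Fintype.piFinset (fun _ : Fin K => U)).filter
      (fun f => ∀ i j, σ (f i) = σ (f j))).card : ℝ) := by
  classical
  have h1 : ∑ c : Fin q, (U.filter (fun x => σ x = c)).card = U.card :=
    (card_eq_sum_card_fiberwise (fun x _ => mem_coe.2 (mem_univ (σ x)))).symm
  have h3 : ∑ c : Fin q, (U.filter (fun x => σ x = c)).card ^ K ≤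
     ((Fintype.piFinset (fun _ : Fin K => U)).filter
      (fun f => ∀ i j, σ (f i) = σ (f j))).card := by
    have : ∀ c : Fin q, (U.filter (fun x => σ x = c)).card ^ K =
      (Fintype.piFinset (fun _ : Fin K => U.filter (fun x => σ x = c))).card := by
      intro c; simp
    rw [sum_congr rfl (fun c _ => this c), ← card_biUnion]
    · refine card_le_card ?_
      intro f hf
      simp only [mem_biUnion, mem_univ, true_and, Fintype.mem_piFinset, mem_filter] at hf ⊢
      obtain ⟨c, hc⟩ := hf
      exact ⟨fun i => (hc i).1, fun i j => (hc i).2.trans (hc j).2.symm⟩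
    · intro c _ d _ hcd
      rw [Function.onFun, disjoint_left]
      intro f hf hf'
      simp only [Fintype.mem_piFinset, mem_filter] at hf hf'
      exact hcd ((hf ⟨0, by omega⟩).2.symm.trans (hf' ⟨0, by omega⟩).2)
  obtain ⟨k, rfl⟩ : ∃ k, K = k + 1 := ⟨K - 1, by omega⟩
  have h5 := pow_sum_div_card_le_sum_pow (s := (univ : Finset (Fin q)))
    (f := fun c => ((U.filter (fun x => σ x = c)).card : ℝ)) (n := k) (fun _ _ => by positivity)
  have h1' : ∑ c : Fin q, ((U.filter (fun x => σ x = c)).card : ℝ) = U.card := by exact_mod_cast h1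
  rw [h1'] at h5
  simp only [card_univ, Fintype.card_fin] at h5
  refine h5.trans ?_
  exact_mod_cast h3

lemma exists_tuple (q K : ℕ) (hq : 2 ≤ q) (hK : 2 ≤ K) (U : Finset ℕ) (N : ℕ → Finset ℕ) (D : ℕ)
    (hN : ∀ x, (N x).card ≤ D) (M : ℕ) (hM : 0 < M) (hU : M ≤ U.card) (p : ℝ)
    (hp : p = 1 / (q : ℝ) ^ (K - 1) - (K * K * D : ℝ) / M) (hp0 : 0 < p)
    (T : Finset (ℕ → Fin q)) (hT : T.Nonempty) :
    ∃ f ∈ goodT K U N, p * T.card ≤ ((T.filter (fun σ => ∀ i j, σ (f i) = σ (f j))).card : ℝ) := by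
  classical
  by_contra hcon
  push Not at hcon
  have hUpos : (0 : ℝ) < U.card := by exact_mod_cast lt_of_lt_of_le hM hU
  have hMpos : (0 : ℝ) < M := by exact_mod_cast hM
  have hTpos : (0 : ℝ) < T.card := by exact_mod_cast hT.card_pos
  have hpow : (U.card : ℝ) ^ K = U.card ^ (K - 1) * U.card := by
    rw [← pow_succ]; congr 1; omega
  have key : ∀ σ ∈ T, p * (U.card : ℝ) ^ K ≤
      (((goodT K U N).filter (fun f => ∀ i j, σ (f i) = σ (f j))).card : ℝ) := by
    intro σ _
    have h1 := mono_card q K hq hK U σ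
    have h2 := bad_card K U N D hN
    have h3 : ((Fintype.piFinset (fun _ : Fin K => U)).filter
      (fun f => ∀ i j, σ (f i) = σ (f j))) ⊆
      ((goodT K U N).filter (fun f => ∀ i j, σ (f i) = σ (f j))) ∪
      ((Fintype.piFinset (fun _ : Fin K => U)) \ goodT K U N) := by
      intro f hf
      rw [mem_filter] at hf
      rw [mem_union, mem_filter, mem_sdiff]
      tauto
    have h4 := (card_le_card h3).trans (card_union_le _ _)
    have h5 : (((Fintype.piFinset (fun _ : Fin K => U)).filter
      (fun f => ∀ i j, σ (f i) = σ (f j))).card : ℝ) ≤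
      (((goodT K U N).filter (fun f => ∀ i j, σ (f i) = σ (f j))).card : ℝ) +
      K * K * (D * (U.card : ℝ) ^ (K - 1)) := by
      exact_mod_cast h4.trans (Nat.add_le_add_left h2 _)
    have h6 : (K * K * D : ℝ) * U.card ^ (K - 1) ≤ (K * K * D : ℝ) / M * U.card ^ K := by
      rw [hpow, div_mul_eq_mul_div, le_div_iff₀ hMpos]
      have : (M : ℝ) ≤ U.card := by exact_mod_cast hU
      rw [← mul_assoc]
      exact mul_le_mul_of_nonneg_left this (by positivity)
    have h7 : p * (U.card : ℝ) ^ K =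
      (U.card : ℝ) ^ K / (q : ℝ) ^ (K - 1) - (K * K * D : ℝ) / M * U.card ^ K := by
      rw [hp]; ring
    linarith
  have hsum : ∑ σ ∈ T, ((goodT K U N).filter (fun f => ∀ i j, σ (f i) = σ (f j))).card =
      ∑ f ∈ goodT K U N, (T.filter (fun σ => ∀ i j, σ (f i) = σ (f j))).card :=
    sum_card_bipartiteAbove_eq_sum_card_bipartiteBelow
      (fun (σ : ℕ → Fin q) (f : Fin K → ℕ) => ∀ i j, σ (f i) = σ (f j))
  have hsum' : ∑ σ ∈ T, (((goodT K U N).filter (fun f => ∀ i j, σ (f i) = σ (f j))).card : ℝ) =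
      ∑ f ∈ goodT K U N, ((T.filter (fun σ => ∀ i j, σ (f i) = σ (f j))).card : ℝ) := by
    exact_mod_cast hsum
  have hlow : (T.card : ℝ) * (p * (U.card : ℝ) ^ K) ≤
      ∑ σ ∈ T, (((goodT K U N).filter (fun f => ∀ i j, σ (f i) = σ (f j))).card : ℝ) := by
    rw [← nsmul_eq_mul]
    exact card_nsmul_le_sum _ _ _ key
  have hlowpos : 0 < (T.card : ℝ) * (p * (U.card : ℝ) ^ K) := by positivity
  rcases (goodT K U N).eq_empty_or_nonempty with h0 | h0
  · rw [hsum', h0] at hlow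
    simp only [sum_empty] at hlow
    linarith
  · have hup := sum_lt_sum_of_nonempty h0 hcon
    have hG : ((goodT K U N).card : ℝ) ≤ (U.card : ℝ) ^ K := by
      have : (goodT K U N).card ≤ (Fintype.piFinset (fun _ : Fin K => U)).card := card_filter_le _ _
      rw [Fintype.card_piFinset] at this
      simp only [prod_const, card_univ, Fintype.card_fin] at this
      exact_mod_cast this
    rw [sum_const, nsmul_eq_mul] at hup
    have : ((goodT K U N).card : ℝ) * (p * T.card) ≤ (U.card : ℝ) ^ K * (p * T.card) :=
      mul_le_mul_of_nonneg_right hG (by positivity)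
    rw [hsum'] at hlow
    nlinarith

/-- invariant of the construction -/
structure HypInv (q K Δ n : ℕ) (p : ℝ) (T : Finset (ℕ → Fin q)) (E : Finset (Finset ℕ)) : Prop where
  sub : ∀ e ∈ E, e ⊆ range n
  unif : ∀ e ∈ E, e.card = K
  lin : ∀ e₁ ∈ E, ∀ e₂ ∈ E, e₁ ≠ e₂ → (e₁ ∩ e₂).card ≤ 1
  deg : ∀ w, hypDegree E w ≤ Δ
  cnt : ∃ S : Finset (ℕ → Fin q), (∀ σ ∈ T, ProperColouring q E σ → σ ∈ S) ∧
    (S.card : ℝ) ≤ (q : ℝ) ^ n * (1 - p) ^ E.card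

def unsat (E : Finset (Finset ℕ)) (n Δ : ℕ) : Finset ℕ :=
  (range n).filter (fun w => hypDegree E w < Δ)

lemma step (q K : ℕ) (hq : 2 ≤ q) (hK : 2 ≤ K) (Δ n M : ℕ) (hM : 0 < M) (p : ℝ)
    (hp : p = 1 / (q : ℝ) ^ (K - 1) - (K * K * (Δ * K + 1 : ℕ) : ℝ) / M) (hp0 : 0 < p)
    (T : Finset (ℕ → Fin q)) (E : Finset (Finset ℕ)) (hE : HypInv q K Δ n p T E)
    (hU : M ≤ (unsat E n Δ).card) (hcol : ∃ σ ∈ T, ProperColouring q E σ) :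
    ∃ E', HypInv q K Δ n p T E' ∧ E'.card = E.card + 1 := by
  classical
  obtain ⟨S, hS, hSc⟩ := hE.cnt
  obtain ⟨σ₀, hσ₀, hσ₀'⟩ := hcol
  obtain ⟨f, hf, hfc⟩ := exists_tuple q K hq hK (unsat E n Δ) (nbr E) (Δ * K + 1)
    (nbr_card E K Δ hE.unif hE.deg) M hM hU p hp hp0 S ⟨σ₀, hS σ₀ hσ₀ hσ₀'⟩
  simp only [goodT, mem_filter, Fintype.mem_piFinset] at hf
  obtain ⟨hfU, hfN⟩ := hf
  have hinj : Function.Injective f := by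
    intro i j hij
    by_contra hne
    apply hfN i j hne
    simp [nbr, hij]
  have hint : ∀ e ∈ E, (image f univ ∩ e).card ≤ 1 := by
    intro e he
    rw [card_le_one]
    intro a ha b hb
    simp only [mem_inter, mem_image, mem_univ, true_and] at ha hb
    obtain ⟨⟨i, rfl⟩, hi⟩ := ha
    obtain ⟨⟨j, rfl⟩, hj⟩ := hb
    by_contra hne
    apply hfN i j (fun h => hne (by rw [h]))
    simp only [nbr, mem_insert, mem_biUnion, mem_filter, id]
    exact Or.inr ⟨e, ⟨he, hi⟩, hj⟩
  have hcard : (image f univ).card = K := by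
    rw [card_image_of_injective _ hinj]; simp
  have hnot : image f univ ∉ E := by
    intro h
    have := hint _ h
    rw [inter_self, hcard] at this
    omega
  refine ⟨insert (image f univ) E, ⟨?_, ?_, ?_, ?_, ?_⟩, card_insert_of_notMem hnot⟩
  · intro e he
    rcases mem_insert.1 he with rfl | he
    · intro x hx
      obtain ⟨i, _, rfl⟩ := mem_image.1 hx
      exact (mem_filter.1 (hfU i)).1
    · exact hE.sub e he
  · intro e he
    rcases mem_insert.1 he with rfl | he
    · exact hcard
    · exact hE.unif e he
  · intro e₁ h₁ e₂ h₂ hne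
    rcases mem_insert.1 h₁ with rfl | h₁ <;> rcases mem_insert.1 h₂ with rfl | h₂
    · exact absurd rfl hne
    · exact hint _ h₂
    · rw [inter_comm]; exact hint _ h₁
    · exact hE.lin _ h₁ _ h₂ hne
  · intro w
    unfold hypDegree
    rw [filter_insert]
    split_ifs with hw
    · obtain ⟨i, _, rfl⟩ := mem_image.1 hw
      refine (card_insert_le _ _).trans ?_
      have := (mem_filter.1 (hfU i)).2
      unfold hypDegree at this
      omega
    · exact hE.deg w
  · refine ⟨S.filter (fun σ => ¬ ∀ i j, σ (f i) = σ (f j)), ?_, ?_⟩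
    · intro σ hσ hpr
      rw [mem_filter]
      refine ⟨hS σ hσ (fun e he => hpr e (mem_insert_of_mem he)), ?_⟩
      intro h
      apply hpr _ (mem_insert_self _ _)
      intro a ha b hb
      obtain ⟨i, _, rfl⟩ := mem_image.1 ha
      obtain ⟨j, _, rfl⟩ := mem_image.1 hb
      exact h i j
    · rw [card_insert_of_notMem hnot, pow_succ]
      have h1 := card_filter_add_card_filter_not (s := S) (fun σ => ∀ i j, σ (f i) = σ (f j))
      have h1' : ((S.filter (fun σ => ∀ i j, σ (f i) = σ (f j))).card : ℝ) +
        ((S.filter (fun σ => ¬ ∀ i j, σ (f i) = σ (f j))).card : ℝ) = S.card := by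
        exact_mod_cast h1
      have hp1 : p ≤ 1 := by
        have : (1 : ℝ) / (q : ℝ) ^ (K - 1) ≤ 1 := by
          apply div_le_one_of_le₀
          · apply one_le_pow₀
            exact_mod_cast (by omega : 1 ≤ q)
          · positivity
        have h2 : (0 : ℝ) ≤ (K * K * (Δ * K + 1 : ℕ) : ℝ) / M := by positivity
        linarith
      have h3 : (S.card : ℝ) * (1 - p) ≤ (q : ℝ) ^ n * (1 - p) ^ E.card * (1 - p) :=
        mul_le_mul_of_nonneg_right hSc (by linarith)
      linarith

lemma deg_sum (K n : ℕ) (E : Finset (Finset ℕ)) (hs : ∀ e ∈ E, e ⊆ range n)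
    (hu : ∀ e ∈ E, e.card = K) : ∑ w ∈ range n, hypDegree E w = E.card * K := by
  classical
  have : ∑ w ∈ range n, hypDegree E w = ∑ e ∈ E, ((range n).filter (fun w => w ∈ e)).card :=
    sum_card_bipartiteAbove_eq_sum_card_bipartiteBelow (fun (w : ℕ) (e : Finset ℕ) => w ∈ e)
  rw [this, sum_const_nat]
  intro e he
  rw [← hu e he]
  congr 1
  ext x
  simp only [mem_filter, and_iff_right_iff_imp]
  exact fun h => hs e he h

/-- A simple uniform hypergraph of bounded degree that is not `q`-colourable. -/
lemma exists_noncol (q K : ℕ) (hq : 2 ≤ q) (hK : 2 ≤ K) (Δ : ℕ)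
    (hΔ : (K : ℝ) * (q : ℝ) ^ (K - 1) * Real.log q + 1 < Δ) :
    ∃ E : Finset (Finset ℕ), (∀ e ∈ E, e.card = K) ∧
      (∀ e₁ ∈ E, ∀ e₂ ∈ E, e₁ ≠ e₂ → (e₁ ∩ e₂).card ≤ 1) ∧
      (∀ w, hypDegree E w ≤ Δ) ∧ ∀ σ : ℕ → Fin q, ¬ ProperColouring q E σ := by
  classical
  have hqpos : (0 : ℝ) < q := by exact_mod_cast (by omega : 0 < q)
  have hKpos : (0 : ℝ) < K := by exact_mod_cast (by omega : 0 < K)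
  have hlog : 0 < Real.log q := Real.log_pos (by exact_mod_cast (by omega : 1 < q))
  have hPpos : (0 : ℝ) < (q : ℝ) ^ (K - 1) := by positivity
  have hΔpos : (0 : ℝ) < Δ := by
    have : 0 < (K : ℝ) * (q : ℝ) ^ (K - 1) * Real.log q := by positivity
    linarith
  -- choose M
  obtain ⟨M, hM, hM2⟩ : ∃ M : ℕ, 0 < M ∧ (K : ℝ) * Real.log q / Δ <
      1 / (q : ℝ) ^ (K - 1) - (K * K * (Δ * K + 1 : ℕ) : ℝ) / M := by
    have hlt : (K : ℝ) * Real.log q / Δ < 1 / (q : ℝ) ^ (K - 1) := by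
      rw [div_lt_div_iff₀ hΔpos hPpos]
      linarith
    have ht := tendsto_const_div_atTop_nhds_zero_nat (K * K * (Δ * K + 1 : ℕ) : ℝ)
    have hev := ht.eventually_lt_const (sub_pos.2 hlt)
    obtain ⟨M, h1, h2⟩ := (hev.and (Filter.eventually_gt_atTop 0)).exists
    exact ⟨M, h2, by linarith⟩
  obtain ⟨p, hp⟩ : ∃ p, p = 1 / (q : ℝ) ^ (K - 1) - (K * K * (Δ * K + 1 : ℕ) : ℝ) / M := ⟨_, rfl⟩
  rw [← hp] at hM2
  have hp0 : 0 < p := lt_of_le_of_lt (by positivity) hM2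
  have hgap : 0 < p * Δ - K * Real.log q := by
    rw [div_lt_iff₀ hΔpos] at hM2
    linarith
  obtain ⟨n, hn⟩ := exists_nat_gt (p * Δ * M / (p * Δ - K * Real.log q))
  rw [div_lt_iff₀ hgap] at hn
  -- the colourings
  let extd : (Fin n → Fin q) → ℕ → Fin q :=
    fun g i => if h : i < n then g ⟨i, h⟩ else ⟨0, by omega⟩
  let T : Finset (ℕ → Fin q) := univ.image extd
  have hTc : T.card ≤ q ^ n := by
    refine card_image_le.trans ?_
    simp
  have h0 : HypInv q K Δ n p T ∅ := by
    refine ⟨by simp, by simp, by simp, by simp [hypDegree], T, fun σ h _ => h, ?_⟩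
    simp only [card_empty, pow_zero, mul_one]
    exact_mod_cast hTc
  have hterm : ∃ E, HypInv q K Δ n p T E ∧
      ((unsat E n Δ).card < M ∨ ¬ ∃ σ ∈ T, ProperColouring q E σ) := by
    by_contra hcon
    push Not at hcon
    have hall : ∀ m, ∃ E, HypInv q K Δ n p T E ∧ E.card = m := by
      intro m
      induction m with
      | zero => exact ⟨∅, h0, rfl⟩
      | succ m ih =>
        obtain ⟨E, hE, hc⟩ := ih
        obtain ⟨h1, h2⟩ := hcon E hE
        obtain ⟨E', hE', hc'⟩ := step q K hq hK Δ n M hM p hp hp0 T E hE h1 h2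
        exact ⟨E', hE', by omega⟩
    obtain ⟨E, hE, hc⟩ := hall (2 ^ n + 1)
    have : E ⊆ (range n).powerset := fun e he => mem_powerset.2 (hE.sub e he)
    have := card_le_card this
    rw [card_powerset, card_range] at this
    omega
  obtain ⟨E, hE, hor⟩ := hterm
  have hno : ¬ ∃ σ ∈ T, ProperColouring q E σ := by
    rcases hor with hlt | h
    · rintro ⟨σ, hσ, hpr⟩
      obtain ⟨S, hS, hSc⟩ := hE.cnt
      have hSpos : (1 : ℝ) ≤ S.card := by
        exact_mod_cast card_pos.2 ⟨σ, hS σ hσ hpr⟩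
      have hsum := deg_sum K n E hE.sub hE.unif
      have hge : ((range n).filter (fun w => ¬ hypDegree E w < Δ)).card * Δ ≤
          ∑ w ∈ range n, hypDegree E w := by
        refine le_trans ?_ (sum_le_sum_of_subset (filter_subset (fun w => ¬ hypDegree E w < Δ) _))
        rw [← smul_eq_mul]
        refine card_nsmul_le_sum _ _ _ ?_
        intro w hw
        exact not_lt.1 (mem_filter.1 hw).2
      have hsplit := card_filter_add_card_filter_not (s := range n) (fun w => hypDegree E w < Δ)
      rw [card_range] at hsplit
      have hnM : (n : ℝ) - M ≤ ((range n).filter (fun w => ¬ hypDegree E w < Δ)).card := by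
        have : n ≤ ((range n).filter (fun w => ¬ hypDegree E w < Δ)).card + M := by
          unfold unsat at hlt; omega
        have : (n : ℝ) ≤ ((range n).filter (fun w => ¬ hypDegree E w < Δ)).card + M := by
          exact_mod_cast this
        linarith
      have hEK : ((n : ℝ) - M) * Δ ≤ E.card * K := by
        have h1 : (((range n).filter (fun w => ¬ hypDegree E w < Δ)).card : ℝ) * Δ ≤
            E.card * K := by
          rw [hsum] at hge
          exact_mod_cast hge
        exact (mul_le_mul_of_nonneg_right hnM hΔpos.le).trans h1
      have hp1 : p ≤ 1 := by
        have : (1 : ℝ) / (q : ℝ) ^ (K - 1) ≤ 1 := by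
          apply div_le_one_of_le₀
          · apply one_le_pow₀
            exact_mod_cast (by omega : 1 ≤ q)
          · positivity
        have h2 : (0 : ℝ) ≤ (K * K * (Δ * K + 1 : ℕ) : ℝ) / M := by positivity
        linarith
      have hexp : (q : ℝ) ^ n * (1 - p) ^ E.card ≤ Real.exp (n * Real.log q - E.card * p) := by
        have e1 : (q : ℝ) ^ n = Real.exp (n * Real.log q) := by
          rw [Real.exp_nat_mul, Real.exp_log hqpos]
        have e2 : (1 - p) ^ E.card ≤ Real.exp (- (E.card * p)) := by
          rw [show -((E.card : ℝ) * p) = E.card * (-p) by ring, Real.exp_nat_mul]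
          exact pow_le_pow_left₀ (by linarith) (by linarith [Real.add_one_le_exp (-p)]) _
        rw [e1, sub_eq_add_neg (_ * _), Real.exp_add]
        exact mul_le_mul_of_nonneg_left e2 (Real.exp_pos _).le
      have hneg : n * Real.log q - E.card * p < 0 := by
        have h1 : p * (((n : ℝ) - M) * Δ) ≤ p * (E.card * K) :=
          mul_le_mul_of_nonneg_left hEK hp0.le
        have h2 : (K : ℝ) * (n * Real.log q - E.card * p) < 0 := by nlinarith
        by_contra h3
        push Not at h3
        have := mul_nonneg hKpos.le h3
        linarith
      have := Real.exp_lt_one_iff.2 hneg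
      linarith
    · exact h
  refine ⟨E, hE.unif, hE.lin, hE.deg, ?_⟩
  intro σ hσ
  apply hno
  refine ⟨extd (fun i => σ i), mem_image_of_mem _ (mem_univ _), ?_⟩
  intro e he h
  apply hσ e he
  intro a ha b hb
  have := h a ha b hb
  have ha' := mem_range.1 (hE.sub e he ha)
  have hb' := mem_range.1 (hE.sub e he hb)
  simpa [extd, ha', hb'] using this

theorem main (q K : ℕ) (hq : 2 ≤ q) (hK : 2 ≤ K) (Δ : ℕ)
    (hΔ : (K : ℝ) * (q : ℝ) ^ (K - 1) * Real.log q + 1 < Δ) :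
    ∃ (E : Finset (Finset ℕ)) (u v : ℕ),
      (∀ e ∈ E, e.card = K) ∧
      (∀ e₁ ∈ E, ∀ e₂ ∈ E, e₁ ≠ e₂ → (e₁ ∩ e₂).card ≤ 1) ∧
      (∀ w, hypDegree E w ≤ Δ) ∧
      u ≠ v ∧ hypDegree E u = 1 ∧ hypDegree E v ≤ Δ ∧
      (∃ σ : ℕ → Fin q, ProperColouring q E σ) ∧
      (∀ σ : ℕ → Fin q, ProperColouring q E σ → σ u ≠ σ v) := by
  classical
  obtain ⟨E₀, h1, h2, h3, h4⟩ := exists_noncol q K hq hK Δ hΔ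
  -- a critical subhypergraph
  obtain ⟨F, hF, hmin⟩ := exists_min_image
    (E₀.powerset.filter (fun F => ∀ σ : ℕ → Fin q, ¬ ProperColouring q F σ)) card
    ⟨E₀, by simp [h4]⟩
  simp only [mem_filter, mem_powerset] at hF hmin
  obtain ⟨hFE, hFn⟩ := hF
  have hFne : F.Nonempty := by
    rw [nonempty_iff_ne_empty]
    rintro rfl
    exact hFn (fun _ => ⟨0, by omega⟩) (by intro e he; simp at he)
  obtain ⟨e, he⟩ := hFne
  have hcol : ∃ σ : ℕ → Fin q, ProperColouring q (F.erase e) σ := by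
    by_contra hc
    push Not at hc
    have := hmin (F.erase e) ⟨(erase_subset _ _).trans hFE, hc⟩
    have := card_erase_lt_of_mem he
    omega
  have hmono : ∀ σ : ℕ → Fin q, ProperColouring q (F.erase e) σ → ∀ a ∈ e, ∀ b ∈ e, σ a = σ b := by
    intro σ hσ
    by_contra hc
    apply hFn σ
    intro g hg
    by_cases hge : g = e
    · subst hge; exact hc
    · exact hσ g (mem_erase.2 ⟨hge, hg⟩)
  have hecard : e.card = K := h1 e (hFE he)
  obtain ⟨v, hv⟩ : e.Nonempty := card_pos.1 (by omega)
  obtain ⟨w, hw⟩ : (e.erase v).Nonempty := card_pos.1 (by rw [card_erase_of_mem hv]; omega)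
  obtain ⟨u, hu⟩ := Infinite.exists_notMem_finset (F.biUnion id)
  have hu' : ∀ g ∈ F, u ∉ g := by
    intro g hg hug
    exact hu (mem_biUnion.2 ⟨g, hg, hug⟩)
  have huv : u ≠ v := fun h => hu' e he (h ▸ hv)
  have hue : u ∉ e.erase v := fun h => hu' e he (mem_of_mem_erase h)
  have hnew : insert u (e.erase v) ∉ F.erase e := fun h =>
    hu' _ (mem_of_mem_erase h) (mem_insert_self _ _)
  have hint : ∀ g ∈ F.erase e, (insert u (e.erase v) ∩ g).card ≤ 1 := by
    intro g hg
    rw [mem_erase] at hg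
    refine le_trans (card_le_card ?_) (h2 e (hFE he) g (hFE hg.2) hg.1.symm)
    intro x hx
    rw [mem_inter, mem_insert] at hx
    rcases hx with ⟨rfl | hx, hxg⟩
    · exact absurd hxg (hu' g hg.2)
    · exact mem_inter.2 ⟨mem_of_mem_erase hx, hxg⟩
  have hdeg : ∀ x, hypDegree (insert (insert u (e.erase v)) (F.erase e)) x ≤ Δ := by
    intro x
    unfold hypDegree
    rw [filter_insert]
    have hF' : hypDegree F x ≤ Δ :=
      (card_le_card (filter_subset_filter _ hFE)).trans (h3 x)
    unfold hypDegree at hF'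
    have hle : ((F.erase e).filter (fun g => x ∈ g)).card ≤ (F.filter (fun g => x ∈ g)).card :=
      card_le_card (filter_subset_filter _ (erase_subset _ _))
    split_ifs with hx
    · refine (card_insert_le _ _).trans ?_
      rcases mem_insert.1 hx with rfl | hx
      · have : (F.erase e).filter (fun g => x ∈ g) = ∅ := by
          rw [filter_eq_empty_iff]
          exact fun g hg => hu' g (mem_of_mem_erase hg)
        rw [this]
        have : (0 : ℝ) < Δ := by
          have : 0 ≤ (K : ℝ) * (q : ℝ) ^ (K - 1) * Real.log q :=
            mul_nonneg (by positivity) (Real.log_natCast_nonneg q)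
          linarith
        have : 0 < Δ := by exact_mod_cast this
        simp only [card_empty]; omega
      · rw [filter_erase]
        have hmem : e ∈ F.filter (fun g => x ∈ g) := mem_filter.2 ⟨he, mem_of_mem_erase hx⟩
        rw [card_erase_add_one hmem]
        exact hF'
    · exact hle.trans hF'
  refine ⟨insert (insert u (e.erase v)) (F.erase e), u, v, ?_, ?_, hdeg, huv, ?_, hdeg v, ?_, ?_⟩
  · intro g hg
    rcases mem_insert.1 hg with rfl | hg
    · rw [card_insert_of_notMem hue, card_erase_of_mem hv]; omega
    · exact h1 g (hFE (mem_of_mem_erase hg))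
  · intro e₁ k₁ e₂ k₂ hne
    rcases mem_insert.1 k₁ with rfl | k₁ <;> rcases mem_insert.1 k₂ with rfl | k₂
    · exact absurd rfl hne
    · exact hint _ k₂
    · rw [inter_comm]; exact hint _ k₁
    · exact h2 _ (hFE (mem_of_mem_erase k₁)) _ (hFE (mem_of_mem_erase k₂)) hne
  · unfold hypDegree
    rw [filter_insert, if_pos (mem_insert_self _ _)]
    have : (F.erase e).filter (fun g => u ∈ g) = ∅ := by
      rw [filter_eq_empty_iff]
      exact fun g hg => hu' g (mem_of_mem_erase hg)
    rw [this]; simp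
  · obtain ⟨σ, hσ⟩ := hcol
    have : Nontrivial (Fin q) := Fin.nontrivial_iff_two_le.2 hq
    obtain ⟨c, hc⟩ := exists_ne (σ w)
    refine ⟨Function.update σ u c, ?_⟩
    intro g hg hm
    rcases mem_insert.1 hg with rfl | hg
    · have hwu : w ≠ u := fun h => hue (h ▸ hw)
      have := hm u (mem_insert_self _ _) w (mem_insert_of_mem hw)
      rw [Function.update_self, Function.update_of_ne hwu] at this
      exact hc this
    · apply hσ g hg
      intro a ha b hb
      have := hm a ha b hb
      have hug := hu' g (mem_of_mem_erase hg)
      have hau : a ≠ u := fun h => hug (h ▸ ha)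
      have hbu : b ≠ u := fun h => hug (h ▸ hb)
      rwa [Function.update_of_ne hau, Function.update_of_ne hbu] at this
  · intro σ hσ huveq
    have hm := hmono σ (fun g hg => hσ g (mem_insert_of_mem hg))
    apply hσ _ (mem_insert_self _ _)
    have hall : ∀ a ∈ insert u (e.erase v), σ a = σ v := by
      intro a ha
      rcases mem_insert.1 ha with rfl | ha
      · exact huveq
      · exact hm a (mem_of_mem_erase ha) v hv
    intro a ha b hb
    rw [hall a ha, hall b hb]

end HypAux

/-- Let `q, K ≥ 2` be integers. Then for all integers `Δ > K·q^{K−1}·ln q + 1`, there exists a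
`K`-uniform simple hypergraph `H` of maximum degree at most `Δ` that admits a proper
`q`-colouring, together with two distinct vertices `u, v` of `H` such that the degree of `u`
is `1`, the degree of `v` is at most `Δ`, and every proper `q`-colouring `σ` of `H` satisfies
`σ(u) ≠ σ(v)`. -/
theorem stmt1 (q K : ℕ) (hq : 2 ≤ q) (hK : 2 ≤ K) (Δ : ℕ)
    (hΔ : (K : ℝ) * (q : ℝ) ^ (K - 1) * Real.log q + 1 < Δ) :
    ∃ (E : Finset (Finset ℕ)) (u v : ℕ),
      (∀ e ∈ E, e.card = K) ∧
      (∀ e₁ ∈ E, ∀ e₂ ∈ E, e₁ ≠ e₂ → (e₁ ∩ e₂).card ≤ 1) ∧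
      (∀ w, hypDegree E w ≤ Δ) ∧
      u ≠ v ∧ hypDegree E u = 1 ∧ hypDegree E v ≤ Δ ∧
      (∃ σ : ℕ → Fin q, ProperColouring q E σ) ∧
      (∀ σ : ℕ → Fin q, ProperColouring q E σ → σ u ≠ σ v) := by
  exact HypAux.main q K hq hK Δ hΔ
end

section
/- For all integers q ≥ 4, k ≥ 2 and d ≥ 3q^k, the function h2(x) := ((x^{d+1} − 1)/(x^d − 1))^d·(q^k − q) − (x^d − 1)/(x − 1) + (q − 1)·x^d has exactly one root in the interval (1, ∞). -/
open Finset in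
lemma aux_amgm (s : ℝ) (hs : 1 ≤ s) (n : ℕ) :
    ((n : ℝ) + 1) * s ^ n ≤ ∑ i ∈ range (n + 1), (s ^ 2) ^ i := by
  induction n using Nat.twoStepInduction with
  | zero => simp
  | one =>
    simp [Finset.sum_range_succ]
    nlinarith [sq_nonneg (s - 1)]
  | more n ih _ =>
    rw [Finset.sum_range_succ, Finset.sum_range_succ']
    have h1 : ∑ i ∈ range (n + 1), (s ^ 2) ^ (i + 1)
        = s ^ 2 * ∑ i ∈ range (n + 1), (s ^ 2) ^ i := by
      rw [Finset.mul_sum]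
      exact Finset.sum_congr rfl fun i _ => by ring
    rw [h1]
    have h2 := mul_le_mul_of_nonneg_left ih (sq_nonneg s)
    have h3 := sq_nonneg (s ^ (n + 2) - 1)
    push_cast
    have e1 : (s ^ 2) ^ (n + 2) = (s ^ (n + 2)) ^ 2 := by ring
    have e2 : s ^ 2 * (((n : ℝ) + 1) * s ^ n) = ((n : ℝ) + 1) * s ^ (n + 2) := by ring
    rw [e2] at h2
    rw [show n + 1 + 1 = n + 2 from rfl, e1]
    simp only [pow_zero]
    nlinarith

lemma aux_key (x : ℝ) (hx : 1 < x) (n : ℕ) :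
    ((n : ℝ) + 1) * (n + 2) * x ^ n * (x - 1) ^ 2 ≤ (x ^ (n + 1) - 1) * (x ^ (n + 2) - 1) := by
  obtain ⟨s, hs0, rfl⟩ : ∃ s : ℝ, 0 ≤ s ∧ x = s ^ 2 :=
    ⟨√x, Real.sqrt_nonneg x, (Real.sq_sqrt (by linarith)).symm⟩
  have hs : 1 ≤ s := by nlinarith
  have h1 := aux_amgm s hs n
  have h2 := aux_amgm s hs (n + 1)
  rw [← geom_sum_mul (s ^ 2) (n + 1), ← geom_sum_mul (s ^ 2) (n + 2)]
  set a := ∑ i ∈ Finset.range (n + 1), (s ^ 2) ^ i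
  set b := ∑ i ∈ Finset.range (n + 1 + 1), (s ^ 2) ^ i with hb
  have h3 : ((n : ℝ) + 1) * (n + 2) * (s ^ 2) ^ n ≤ a * b := by
    calc ((n : ℝ) + 1) * (n + 2) * (s ^ 2) ^ n
        = (((n : ℝ) + 1) * s ^ n) * (((n : ℝ) + 2) * s ^ n) := by ring
      _ ≤ (((n : ℝ) + 1) * s ^ n) * ((((n + 1 : ℕ) : ℝ) + 1) * s ^ (n + 1)) := by
        push_cast
        have : s ^ n ≤ s ^ (n + 1) := pow_le_pow_right₀ hs (by omega)
        have e : (n : ℝ) + 1 + 1 = n + 2 := by ring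
        rw [e]
        gcongr
      _ ≤ a * b := by
        apply mul_le_mul h1 h2 (by positivity) (le_trans (by positivity) h1)
  have := mul_le_mul_of_nonneg_right h3 (sq_nonneg (s ^ 2 - 1))
  calc _ ≤ _ := this
    _ = _ := by ring

lemma aux_mono (n : ℕ) : MonotoneOn
    (fun x : ℝ => ((n : ℝ) + 1) * Real.log (x ^ (n + 2) - 1)
      - (n + 2) * Real.log (x ^ (n + 1) - 1) + Real.log (x - 1)) (Set.Ioi 1) := by
  have key : ∀ x ∈ Set.Ioi (1 : ℝ), HasDerivAt
      (fun x : ℝ => ((n : ℝ) + 1) * Real.log (x ^ (n + 2) - 1)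
      - (n + 2) * Real.log (x ^ (n + 1) - 1) + Real.log (x - 1))
      (((n : ℝ) + 1) * ((((n + 2 : ℕ) : ℝ) * x ^ (n + 1)) / (x ^ (n + 2) - 1))
      - (n + 2) * ((((n + 1 : ℕ) : ℝ) * x ^ n) / (x ^ (n + 1) - 1)) + 1 / (x - 1)) x := by
    intro x hx
    have hx : 1 < x := hx
    have p1 : 1 < x ^ (n + 2) := one_lt_pow₀ hx (by omega)
    have p2 : 1 < x ^ (n + 1) := one_lt_pow₀ hx (by omega)
    have a1 := (((hasDerivAt_pow (n + 2) x).sub_const 1).log (by linarith)).const_mul ((n : ℝ) + 1)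
    have a2 := (((hasDerivAt_pow (n + 1) x).sub_const 1).log (by linarith)).const_mul ((n : ℝ) + 2)
    have a3 := ((hasDerivAt_id x).sub_const 1).log (by simp; linarith)
    exact (a1.sub a2).add a3
  apply monotoneOn_of_deriv_nonneg (convex_Ioi 1)
  · exact fun x hx => (key x hx).continuousAt.continuousWithinAt
  · intro x hx
    rw [interior_Ioi] at hx
    exact (key x hx).differentiableAt.differentiableWithinAt
  · intro x hx
    rw [interior_Ioi] at hx
    rw [(key x hx).deriv]
    have hx : 1 < x := hx
    have p1 : 0 < x ^ (n + 2) - 1 := sub_pos.2 (one_lt_pow₀ hx (by omega))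
    have p2 : 0 < x ^ (n + 1) - 1 := sub_pos.2 (one_lt_pow₀ hx (by omega))
    have p3 : 0 < x - 1 := by linarith
    have hk := aux_key x hx n
    have : (((n : ℝ) + 1) * ((((n + 2 : ℕ) : ℝ) * x ^ (n + 1)) / (x ^ (n + 2) - 1))
      - (n + 2) * ((((n + 1 : ℕ) : ℝ) * x ^ n) / (x ^ (n + 1) - 1)) + 1 / (x - 1))
      = ((x ^ (n + 1) - 1) * (x ^ (n + 2) - 1) - ((n : ℝ) + 1) * (n + 2) * x ^ n * (x - 1) ^ 2)
        / ((x ^ (n + 1) - 1) * (x ^ (n + 2) - 1) * (x - 1)) := by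
      have := p1.ne'
      have := p2.ne'
      have := p3.ne'
      push_cast
      field_simp
      ring
    rw [this]
    exact div_nonneg (by linarith) (by positivity)

/-- The normalized function is monotone. -/
lemma aux_A (n : ℕ) : MonotoneOn
    (fun x : ℝ => ((x ^ (n + 2) - 1) / (x ^ (n + 1) - 1)) ^ (n + 1) *
      ((x - 1) / (x ^ (n + 1) - 1))) (Set.Ioi 1) := by
  have e : ∀ x ∈ Set.Ioi (1 : ℝ), ((x ^ (n + 2) - 1) / (x ^ (n + 1) - 1)) ^ (n + 1) *
      ((x - 1) / (x ^ (n + 1) - 1)) = Real.exp (((n : ℝ) + 1) * Real.log (x ^ (n + 2) - 1)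
      - (n + 2) * Real.log (x ^ (n + 1) - 1) + Real.log (x - 1)) := by
    intro x hx
    have hx : 1 < x := hx
    have p1 : 0 < x ^ (n + 2) - 1 := sub_pos.2 (one_lt_pow₀ hx (by omega))
    have p2 : 0 < x ^ (n + 1) - 1 := sub_pos.2 (one_lt_pow₀ hx (by omega))
    have p3 : 0 < x - 1 := by linarith
    rw [← Real.exp_log (show 0 < ((x ^ (n + 2) - 1) / (x ^ (n + 1) - 1)) ^ (n + 1) *
      ((x - 1) / (x ^ (n + 1) - 1)) by positivity)]
    congr 1
    rw [Real.log_mul (by positivity) (by positivity), Real.log_pow,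
      Real.log_div p1.ne' p2.ne', Real.log_div p3.ne' p2.ne']
    push_cast
    ring
  intro x hx y hy hxy
  simp only
  rw [e x hx, e y hy]
  exact Real.exp_le_exp.2 (aux_mono n hx hy hxy)

lemma aux_B (d : ℕ) (hd : 1 ≤ d) (x y : ℝ) (hx : 1 < x) (hxy : x < y) :
    x ^ d * ((x - 1) / (x ^ d - 1)) < y ^ d * ((y - 1) / (y ^ d - 1)) := by
  have hy : 1 < y := hx.trans hxy
  have p1 : 0 < x ^ d - 1 := sub_pos.2 (one_lt_pow₀ hx (by omega))
  have p2 : 0 < y ^ d - 1 := sub_pos.2 (one_lt_pow₀ hy (by omega))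
  have g1 : x ^ d * ((x - 1) / (x ^ d - 1)) = 1 / (∑ i ∈ Finset.range d, (1 / x) ^ (i + 1)) := by
    have h := geom_sum_mul (1 / x) d
    have e : ∑ i ∈ Finset.range d, (1 / x) ^ (i + 1)
        = (∑ i ∈ Finset.range d, (1 / x) ^ i) * (1 / x) := by
      rw [Finset.sum_mul]; exact Finset.sum_congr rfl fun i _ => by ring
    have h0 : (x - 1) ≠ 0 := by linarith
    have hx0 : x ≠ 0 := by linarith
    have e2 : ∑ i ∈ Finset.range d, (1 / x) ^ (i + 1) = (x ^ d - 1) / (x ^ d * (x - 1)) := by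
      rw [e, eq_div_iff (by positivity)]
      have : (1 / x) ^ d * x ^ d = 1 := by rw [← mul_pow]; field_simp; simp
      have h3 : (1 / x) * x = 1 := by field_simp
      linear_combination (-(x ^ d)) * h - this + (x ^ d * (∑ i ∈ Finset.range d, (1 / x) ^ i)) * h3
    rw [e2]
    field_simp
  have g2 : y ^ d * ((y - 1) / (y ^ d - 1)) = 1 / (∑ i ∈ Finset.range d, (1 / y) ^ (i + 1)) := by
    have h := geom_sum_mul (1 / y) d
    have e : ∑ i ∈ Finset.range d, (1 / y) ^ (i + 1)
        = (∑ i ∈ Finset.range d, (1 / y) ^ i) * (1 / y) := by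
      rw [Finset.sum_mul]; exact Finset.sum_congr rfl fun i _ => by ring
    have h0 : (y - 1) ≠ 0 := by linarith
    have hx0 : y ≠ 0 := by linarith
    have e2 : ∑ i ∈ Finset.range d, (1 / y) ^ (i + 1) = (y ^ d - 1) / (y ^ d * (y - 1)) := by
      rw [e, eq_div_iff (by positivity)]
      have : (1 / y) ^ d * y ^ d = 1 := by rw [← mul_pow]; field_simp; simp
      have h3 : (1 / y) * y = 1 := by field_simp
      linear_combination (-(y ^ d)) * h - this + (y ^ d * (∑ i ∈ Finset.range d, (1 / y) ^ i)) * h3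
    rw [e2]
    field_simp
  rw [g1, g2]
  have hne : (Finset.range d).Nonempty := by simp; omega
  apply one_div_lt_one_div_of_lt
  · apply Finset.sum_pos _ hne
    intro i _
    have : 0 < y := by linarith
    positivity
  · apply Finset.sum_lt_sum_of_nonempty hne
    intro i _
    apply pow_lt_pow_left₀ _ _ (by omega)
    · exact one_div_lt_one_div_of_lt (by linarith) hxy
    · have : 0 < y := by linarith
      positivity

/-- For all integers `q ≥ 4`, `k ≥ 2` and `d ≥ 3q^k`, the function
`h2(x) = ((x^{d+1} − 1)/(x^d − 1))^d·(q^k − q) − (x^d − 1)/(x − 1) + (q − 1)·x^d`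
has exactly one root in `(1, ∞)`. -/
theorem stmt7 (q k d : ℕ) (hq : 4 ≤ q) (hk : 2 ≤ k) (hd : 3 * q ^ k ≤ d) :
    ∃! x : ℝ, 1 < x ∧
      ((x ^ (d + 1) - 1) / (x ^ d - 1)) ^ d * ((q : ℝ) ^ k - q)
        - (x ^ d - 1) / (x - 1) + ((q : ℝ) - 1) * x ^ d = 0 := by
  have hqR : (4 : ℝ) ≤ q := by exact_mod_cast hq
  have hdR : 3 * (q : ℝ) ^ k ≤ d := by exact_mod_cast hd
  have hM : 0 ≤ (q : ℝ) ^ k - q := by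
    have : (q : ℝ) ^ 1 ≤ (q : ℝ) ^ k := pow_le_pow_right₀ (by linarith) (by omega)
    simpa using this
  have hd1 : 1 ≤ d := by
    have : 0 < q ^ k := Nat.pow_pos (by omega)
    omega
  set M : ℝ := (q : ℝ) ^ k - q with hMdef
  refine existsUnique_of_exists_of_unique ?_ ?_
  · set Q : ℕ → ℝ → ℝ := fun n x => ∑ i ∈ Finset.range n, x ^ i with hQ
    have hQc : ∀ n, Continuous (Q n) := fun n => by
      simp only [hQ]; fun_prop
    have hQpos : ∀ x : ℝ, 1 ≤ x → 0 < Q d x := fun x hx => by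
      apply Finset.sum_pos
      · intro i _; positivity
      · simp; omega
    have hcont : ContinuousOn (fun x : ℝ => (Q (d + 1) x / Q d x) ^ d * M - Q d x
        + ((q : ℝ) - 1) * x ^ d) (Set.Icc 1 2) := by
      apply ContinuousOn.add
      · apply ContinuousOn.sub
        · apply ContinuousOn.mul _ continuousOn_const
          apply ContinuousOn.pow
          exact (hQc _).continuousOn.div (hQc _).continuousOn fun x hx => (hQpos x hx.1).ne'
        · exact (hQc _).continuousOn
      · fun_prop
    have hneg : (Q (d + 1) 1 / Q d 1) ^ d * M - Q d 1 + ((q : ℝ) - 1) * 1 ^ d < 0 := by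
      have q1 : Q (d + 1) 1 = d + 1 := by simp [hQ]
      have q2 : Q d 1 = d := by simp [hQ]
      have hd0 : (0 : ℝ) < d := by exact_mod_cast hd1
      have h3 : (((d : ℝ) + 1) / d) ^ d ≤ 3 := by
        have a : ((d : ℝ) + 1) / d ≤ Real.exp (1 / d) := by
          have := Real.add_one_le_exp (1 / (d : ℝ))
          have e : ((d : ℝ) + 1) / d = 1 / d + 1 := by field_simp; ring
          rw [e]; exact this
        calc (((d : ℝ) + 1) / d) ^ d ≤ (Real.exp (1 / d)) ^ d := by gcongr
          _ = Real.exp 1 := by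
            rw [← Real.exp_nat_mul]; congr 1; field_simp
          _ ≤ 3 := by linarith [Real.exp_one_lt_d9]
      rw [q1, q2]
      have := mul_le_mul_of_nonneg_right h3 hM
      rw [one_pow]
      linarith
    have hpos : 0 < (Q (d + 1) 2 / Q d 2) ^ d * M - Q d 2 + ((q : ℝ) - 1) * 2 ^ d := by
      have q2 : Q d 2 = 2 ^ d - 1 := by
        have := geom_sum_mul (2 : ℝ) d
        simp only [hQ]
        linarith
      have h0 : 0 ≤ (Q (d + 1) 2 / Q d 2) ^ d * M := by
        apply mul_nonneg _ hM
        have : 0 ≤ Q (d + 1) 2 := Finset.sum_nonneg fun i _ => by positivity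
        have := hQpos 2 (by norm_num)
        positivity
      have h2 : (0 : ℝ) < 2 ^ d := by positivity
      nlinarith
    obtain ⟨x, hx, hx0⟩ := intermediate_value_Icc (by norm_num : (1 : ℝ) ≤ 2) hcont
      (show (0 : ℝ) ∈ Set.Icc _ _ from ⟨hneg.le, hpos.le⟩)
    have hx1 : 1 < x := by
      rcases hx.1.lt_or_eq with h | h
      · exact h
      · subst h
        exact absurd hx0 hneg.ne
    refine ⟨x, hx1, ?_⟩
    have p3 : x - 1 ≠ 0 := by linarith
    have r1 : ∀ n, x ^ n - 1 = Q n x * (x - 1) := fun n => (geom_sum_mul x n).symm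
    rw [r1, r1, mul_div_mul_right _ _ p3, mul_div_cancel_right₀ _ p3]
    exact hx0
  · have main : ∀ x y : ℝ, 1 < x → x < y →
        ((x ^ (d + 1) - 1) / (x ^ d - 1)) ^ d * M
          - (x ^ d - 1) / (x - 1) + ((q : ℝ) - 1) * x ^ d = 0 →
        ((y ^ (d + 1) - 1) / (y ^ d - 1)) ^ d * M
          - (y ^ d - 1) / (y - 1) + ((q : ℝ) - 1) * y ^ d = 0 → False := by
      intro x y hx hxy h1 h2
      have hy := hx.trans hxy
      have B := aux_B d hd1 x y hx hxy
      have A : ((x ^ (d + 1) - 1) / (x ^ d - 1)) ^ d * ((x - 1) / (x ^ d - 1))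
          ≤ ((y ^ (d + 1) - 1) / (y ^ d - 1)) ^ d * ((y - 1) / (y ^ d - 1)) := by
        obtain ⟨n, rfl⟩ : ∃ n, d = n + 1 := ⟨d - 1, by omega⟩
        exact aux_A n hx hy hxy.le
      have norm : ∀ z : ℝ, 1 < z → (z ^ d - 1) / (z - 1) * ((z - 1) / (z ^ d - 1)) = 1 := by
        intro z hz
        have p1 : z ^ d - 1 ≠ 0 := (sub_pos.2 (one_lt_pow₀ hz (by omega))).ne'
        have p2 : z - 1 ≠ 0 := by linarith
        field_simp
      have nx := norm x hx
      have ny := norm y hy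
      have A' := mul_le_mul_of_nonneg_left A hM
      have B' := mul_lt_mul_of_pos_left B (show 0 < (q : ℝ) - 1 by linarith)
      have h1' := congrArg (· * ((x - 1) / (x ^ d - 1))) h1
      have h2' := congrArg (· * ((y - 1) / (y ^ d - 1))) h2
      simp only [zero_mul, add_mul, sub_mul _ _ ((x - 1) / (x ^ d - 1))] at h1'
      simp only [zero_mul, add_mul, sub_mul _ _ ((y - 1) / (y ^ d - 1))] at h2'
      rw [nx] at h1'
      rw [ny] at h2'
      linarith
    rintro x y ⟨hx, h1⟩ ⟨hy, h2⟩
    rcases lt_trichotomy x y with h | h | h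
    · exact (main x y hx h h1 h2).elim
    · exact h
    · exact (main y x hy h h2 h1).elim
end

section
/- Let q ≥ 4 be an even integer, k ≥ 2 an integer, and d = 5q^k. Set y_E := 1 + 1/(2(q^k − q − 1)). Then: (a) there exists a real x_E > 1 + 1/(q^k − q − 1) with f2(x_E, y_E) = 0; and (b) y_E < x**, where x** is the unique root in (1, ∞) of h2(x) := ((x^{d+1} − 1)/(x^d − 1))^d·(q^k − q) − (x^d − 1)/(x − 1) + (q − 1)·x^d. -/
/-- `h2(x) = ((x^{d+1} − 1)/(x^d − 1))^d·(q^k − q) − (x^d − 1)/(x − 1) + (q − 1)·x^d`. -/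
noncomputable def h2 (q k d : ℕ) (x : ℝ) : ℝ :=
  ((x ^ (d + 1) - 1) / (x ^ d - 1)) ^ d * ((q : ℝ) ^ k - q)
    - (x ^ d - 1) / (x - 1) + ((q : ℝ) - 1) * x ^ d

/-- `f2(x,y) = (y−1)·[(1 + y^d(x−1)/(y^d−1))^d·(q^k−q) + (q−1)·x^d] − x^d + 1`. -/
noncomputable def f2 (q k d : ℕ) (x y : ℝ) : ℝ :=
  (y - 1) * ((1 + y ^ d * (x - 1) / (y ^ d - 1)) ^ d * ((q : ℝ) ^ k - q)
    + ((q : ℝ) - 1) * x ^ d) - x ^ d + 1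

open Real in
lemma aux_pow_lower (u : ℝ) (hu : 0 ≤ u) (d : ℕ) : exp (d * (2 * u / (u + 2))) ≤ (1 + u) ^ d := by
  have h := Real.le_log_one_add_of_nonneg hu
  rw [Real.exp_nat_mul]
  apply pow_le_pow_left₀ (exp_pos _).le
  calc exp (2 * u / (u + 2)) ≤ exp (log (1 + u)) := exp_le_exp.2 h
    _ = 1 + u := exp_log (by linarith)

open Real in
lemma aux_pow_upper (u : ℝ) (hu : 0 ≤ u) (d : ℕ) : (1 + u) ^ d ≤ exp (d * u) := by
  rw [Real.exp_nat_mul]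
  apply pow_le_pow_left₀ (by linarith)
  linarith [add_one_le_exp u]

open Real in
lemma aux_exp5 : 148.2 ≤ exp 5 := by
  have h := Real.exp_one_gt_d9
  have e : exp 5 = exp 1 ^ 5 := by rw [← Real.exp_nat_mul]; norm_num
  rw [e]
  calc (148.2:ℝ) ≤ 2.7182818 ^ 5 := by norm_num
    _ ≤ _ := pow_le_pow_left₀ (by norm_num) (by linarith) 5

open Real in
lemma aux_exp25 : 12.17 ≤ exp 2.5 := by
  have h := aux_exp5
  have e : exp 5 = exp 2.5 * exp 2.5 := by rw [← Real.exp_add]; norm_num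
  have := exp_pos 2.5
  by_contra hc
  push Not at hc
  nlinarith

open Real in
lemma aux_exp4 : exp 4 ≤ 55 := by
  have h := Real.exp_one_lt_d9
  have e : exp 4 = exp 1 ^ 4 := by rw [← Real.exp_nat_mul]; norm_num
  rw [e]
  calc exp 1 ^ 4 ≤ 2.7182819 ^ 4 := pow_le_pow_left₀ (exp_pos 1).le (by linarith) 4
    _ ≤ _ := by norm_num

open Real in
lemma aux_exp448 : exp 0.448 ≤ 1.566 := by
  have h := Real.exp_bound' (x := 0.448) (by norm_num) (by norm_num) (n := 5) (by norm_num)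
  refine h.trans ?_
  norm_num [Finset.sum_range_succ, Nat.factorial]

/-- value at `x0 = 1 + 1/N` is negative -/
lemma aux_neg (N q Q : ℝ) (d : ℕ) (hq : 4 ≤ q) (hN : N = Q - q - 1) (hQ : q ^ 2 ≤ Q)
    (hd : (d : ℝ) = 5 * Q) (y x : ℝ) (hy : y = 1 + 1 / (2 * N)) (hx : x = 1 + 1 / N) :
    (y - 1) * ((1 + y ^ d * (x - 1) / (y ^ d - 1)) ^ d * (Q - q) + (q - 1) * x ^ d)
      - x ^ d + 1 < 0 := by
  have hN11 : 11 ≤ N := by nlinarith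
  have hNq : q ^ 2 - q - 1 ≤ N := by linarith
  have hN0 : 0 < N := by linarith
  have hQN : Q - q = N + 1 := by linarith
  have hX : 148.2 ≤ x ^ d := by
    rw [hx]
    refine le_trans ?_ (aux_pow_lower (1 / N) (by positivity) d)
    refine aux_exp5.trans (Real.exp_le_exp.2 ?_)
    rw [hd]
    have : 2 * (1 / N) / (1 / N + 2) = 2 / (2 * N + 1) := by field_simp; ring
    rw [this, mul_div_assoc', le_div_iff₀ (by positivity)]
    nlinarith
  set σ := Q / (N + 1) with hσ
  have hσ1 : 1 ≤ σ := by rw [hσ, le_div_iff₀ (by positivity)]; linarith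
  have hY : 12.17 * (1 + 2.5 * (σ - 1)) ≤ y ^ d := by
    rw [hy]
    refine le_trans ?_ (aux_pow_lower (1 / (2 * N)) (by positivity) d)
    have h1 : Real.exp (2.5 + 2.5 * (σ - 1)) ≤
        Real.exp (d * (2 * (1 / (2 * N)) / (1 / (2 * N) + 2))) := by
      apply Real.exp_le_exp.2
      rw [hd]
      have : 2 * (1 / (2 * N)) / (1 / (2 * N) + 2) = 2 / (4 * N + 1) := by field_simp; ring
      rw [this, hσ]
      have : 2.5 + 2.5 * (Q / (N + 1) - 1) = 2.5 * Q / (N + 1) := by ring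
      rw [this, mul_div_assoc', div_le_div_iff₀ (by positivity) (by positivity)]
      nlinarith
    refine le_trans ?_ h1
    rw [Real.exp_add]
    have h2 := Real.add_one_le_exp (2.5 * (σ - 1))
    exact mul_le_mul aux_exp25 (by linarith) (by linarith) (Real.exp_pos _).le
  set Y := y ^ d with hYd
  set X := x ^ d with hXd
  have hY1 : 0 < Y - 1 := by nlinarith
  have hmain : (1 + Y * (x - 1) / (Y - 1)) ^ d ≤ 1.566 * X := by
    have e1 : 1 + Y * (x - 1) / (Y - 1) = x * (1 + 1 / ((N + 1) * (Y - 1))) := by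
      rw [hx]; field_simp; ring
    rw [e1, mul_pow, mul_comm]
    apply mul_le_mul_of_nonneg_right _ (by linarith)
    refine (aux_pow_upper _ (by positivity) d).trans (le_trans (Real.exp_le_exp.2 ?_) aux_exp448)
    have : (d : ℝ) * (1 / ((N + 1) * (Y - 1))) = 5 * σ / (Y - 1) := by
      rw [hd, hσ]; field_simp
    rw [this, div_le_iff₀ hY1]
    nlinarith
  have hyN : y - 1 = 1 / (2 * N) := by rw [hy]; ring
  rw [hyN, hQN]
  have : 1 / (2 * N) * ((1 + Y * (x - 1) / (Y - 1)) ^ d * (N + 1) + (q - 1) * X) ≤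
      1 / (2 * N) * ((1.566 * X) * (N + 1) + (q - 1) * X) := by gcongr
  have h3 : 1 / (2 * N) * ((1.566 * X) * (N + 1) + (q - 1) * X) - X + 1 < 0 := by
    have : 1 / (2 * N) * ((1.566 * X) * (N + 1) + (q - 1) * X) - X + 1 =
      ((1.566 * (N + 1) + (q - 1) - 2 * N) * X + 2 * N) / (2 * N) := by field_simp
    rw [this]
    apply div_neg_of_neg_of_pos _ (by positivity)
    have h4 : 1.566 * (N + 1) + (q - 1) - 2 * N ≤ 0 := by nlinarith
    have h5 := mul_le_mul_of_nonpos_left hX h4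
    nlinarith
  linarith

/-- some large `x` gives a positive value -/
lemma aux_pos (N q Q : ℝ) (d : ℕ) (hq : 4 ≤ q) (hN : N = Q - q - 1) (hQ : q ^ 2 ≤ Q)
    (hd : (d : ℝ) = 5 * Q) (y : ℝ) (hy : y = 1 + 1 / (2 * N)) :
    ∃ x : ℝ, 2 ≤ x ∧
    0 < (y - 1) * ((1 + y ^ d * (x - 1) / (y ^ d - 1)) ^ d * (Q - q) + (q - 1) * x ^ d)
      - x ^ d + 1 := by
  have hN11 : 11 ≤ N := by nlinarith
  have hN0 : 0 < N := by linarith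
  have hQN : Q - q = N + 1 := by linarith
  have hd80 : (80 : ℝ) ≤ d := by nlinarith
  have hd0 : d ≠ 0 := by rintro rfl; norm_num at hd80
  have hyN : y - 1 = 1 / (2 * N) := by rw [hy]; ring
  have hyp : 0 < 1 / (2 * N) := by positivity
  have hY1 : 0 < y ^ d - 1 := by
    have : 1 < y ^ d := one_lt_pow₀ (by linarith) hd0
    linarith
  have hY2 : y ^ d ≤ 55 := by
    rw [hy]
    refine (aux_pow_upper _ hyp.le d).trans (le_trans (Real.exp_le_exp.2 ?_) aux_exp4)
    rw [hd, mul_one_div, div_le_iff₀ (by positivity)]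
    nlinarith
  set Y := y ^ d with hYd
  set w := 1 / (Y - 1) with hw
  have hwd : 1 / (d : ℝ) < w := by
    rw [hw]
    exact one_div_lt_one_div_of_lt hY1 (by linarith)
  set δ := 1 / (d : ℝ) with hδ
  have hδ0 : 0 < δ := by positivity
  have hwδ : 0 < w - δ := by linarith
  refine ⟨w / (w - δ) + 2, ?_, ?_⟩
  · have : 0 < w / (w - δ) := by apply div_pos <;> linarith
    linarith
  set x := w / (w - δ) + 2 with hx
  have hx2 : 2 ≤ x := by
    have : 0 < w / (w - δ) := by apply div_pos <;> linarith
    linarith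
  have hxw : w ≤ x * (w - δ) := by
    have : x * (w - δ) = w + 2 * (w - δ) := by rw [hx]; field_simp
    linarith
  have h1 : (1 + δ) * x ≤ 1 + Y * (x - 1) / (Y - 1) := by
    have : 1 + Y * (x - 1) / (Y - 1) = x + w * (x - 1) := by rw [hw]; field_simp; ring
    rw [this]; nlinarith
  have h2 : 2 * x ^ d ≤ (1 + Y * (x - 1) / (Y - 1)) ^ d := by
    refine le_trans ?_ (pow_le_pow_left₀ (by positivity) h1 d)
    rw [mul_pow]
    apply mul_le_mul_of_nonneg_right _ (by positivity)
    have := one_add_mul_le_pow (a := δ) (by linarith) d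
    have e : (d : ℝ) * δ = 1 := by rw [hδ]; field_simp
    linarith
  have hXp : 0 < x ^ d := by positivity
  set X := x ^ d with hX
  rw [hyN, hQN]
  have h3 : 1 / (2 * N) * ((2 * X) * (N + 1) + (q - 1) * X) ≤
     1 / (2 * N) * ((1 + Y * (x - 1) / (Y - 1)) ^ d * (N + 1) + (q - 1) * X) := by gcongr
  have h4 : 1 / (2 * N) * ((2 * X) * (N + 1) + (q - 1) * X) = X + (q + 1) * X / (2 * N) := by
    field_simp; ring
  have : 0 < (q + 1) * X / (2 * N) := by positivity
  linarith

lemma aux_step (a b G τ g : ℝ) (h : g * (1 + τ / 2 + τ ^ 2 / 6) ≤ 1) (hg : 0 < g)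
    (ha0 : 0 ≤ a) (ha : a ≤ τ) (hb : τ ≤ b) (hG : 1 ≤ G * (1 + a / 2 + a ^ 2 / 6))
    (hfin : (45 / 44) * (b + G) * (1 + G + G ^ 2) < 5) :
    (45 / 44) * (τ + g) * (1 + g + g ^ 2) < 5 := by
  have hD : 1 + a / 2 + a ^ 2 / 6 ≤ 1 + τ / 2 + τ ^ 2 / 6 := by gcongr
  have hDp : 0 < 1 + a / 2 + a ^ 2 / 6 := by positivity
  have hgG : g ≤ G := by
    have := mul_le_mul_of_nonneg_left hD hg.le
    exact le_of_mul_le_mul_right (by linarith) hDp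
  refine lt_of_le_of_lt ?_ hfin
  have : 0 ≤ τ := by linarith
  have : 0 ≤ b + G := by linarith
  have : 0 ≤ 45 / 44 * (b + G) := by positivity
  gcongr

lemma aux_poly (τ g : ℝ) (h : g * (1 + τ / 2 + τ ^ 2 / 6) ≤ 1) (hg : 0 < g)
    (h0 : 0 ≤ τ) (h1 : τ ≤ 40 / 11) :
    (45 / 44) * (τ + g) * (1 + g + g ^ 2) < 5 := by
  rcases le_total τ 0.5 with c1 | c1
  · exact aux_step 0 0.5 1 τ g h hg (by norm_num) h0 c1 (by norm_num) (by norm_num)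
  rcases le_total τ 1 with c2 | c2
  · exact aux_step 0.5 1 0.78 τ g h hg (by norm_num) c1 c2 (by norm_num) (by norm_num)
  rcases le_total τ 1.6 with c3 | c3
  · exact aux_step 1 1.6 0.6 τ g h hg (by norm_num) c2 c3 (by norm_num) (by norm_num)
  rcases le_total τ 2.3 with c4 | c4
  · exact aux_step 1.6 2.3 0.45 τ g h hg (by norm_num) c3 c4 (by norm_num) (by norm_num)
  rcases le_total τ 2.9 with c5 | c5
  · exact aux_step 2.3 2.9 0.331 τ g h hg (by norm_num) c4 c5 (by norm_num) (by norm_num)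
  rcases le_total τ 3.3 with c6 | c6
  · exact aux_step 2.9 3.3 0.26 τ g h hg (by norm_num) c5 c6 (by norm_num) (by norm_num)
  rcases le_total τ 3.5 with c7 | c7
  · exact aux_step 3.3 3.5 0.224 τ g h hg (by norm_num) c6 c7 (by norm_num) (by norm_num)
  · exact aux_step 3.5 (40/11) 0.209 τ g h hg (by norm_num) c7 h1 (by norm_num) (by norm_num)

set_option maxHeartbeats 1000000 in
/-- `h2` is negative on `(1, y_E]`. -/
lemma aux_h2 (N q Q : ℝ) (d : ℕ) (hq : 4 ≤ q) (hN : N = Q - q - 1) (hQ : q ^ 2 ≤ Q)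
    (hd : (d : ℝ) = 5 * Q) (x : ℝ) (hx1 : 1 < x) (hx : x ≤ 1 + 1 / (2 * N)) :
    ((x ^ (d + 1) - 1) / (x ^ d - 1)) ^ d * (Q - q)
      - (x ^ d - 1) / (x - 1) + (q - 1) * x ^ d < 0 := by
  have hN11 : 11 ≤ N := by nlinarith
  have hN0 : 0 < N := by linarith
  have hd80 : (80 : ℝ) ≤ d := by nlinarith
  have hd0 : d ≠ 0 := by rintro rfl; norm_num at hd80
  obtain ⟨z, rfl⟩ : ∃ z, x = 1 + z := ⟨x - 1, by ring⟩
  have hz : 0 < z := by linarith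
  have hzN : z ≤ 1 / (2 * N) := by linarith
  have hz22 : z ≤ 1 / 22 := hzN.trans (one_div_le_one_div_of_le (by norm_num) (by linarith))
  set P := (1 + z) ^ d with hP
  have hP1 : 0 < P - 1 := by
    have : 1 < P := one_lt_pow₀ hx1 hd0
    linarith
  set t := (d : ℝ) * z with ht
  have ht0 : 0 < t := by positivity
  have htle : t ≤ 40 / 11 := by
    calc t ≤ d * (1 / (2 * N)) := by rw [ht]; gcongr
      _ = 5 * Q / (2 * N) := by rw [hd]; ring
      _ ≤ 40 / 11 := by
        rw [div_le_div_iff₀ (by positivity) (by norm_num)]; nlinarith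
  set τ := Real.log P with hτ
  have hPe : Real.exp τ = P := Real.exp_log (by linarith)
  have hτ0 : 0 < τ := Real.log_pos (by linarith)
  have hτt : τ ≤ t := by
    rw [hτ, Real.log_le_iff_le_exp (by linarith)]
    exact aux_pow_upper z hz.le d
  have htτ : t ≤ τ * (1 + z / 2) := by
    have h := aux_pow_lower z hz.le d
    rw [← hP, ← Real.le_log_iff_exp_le (by linarith), ← hτ] at h
    have e : (d : ℝ) * (2 * z / (z + 2)) * (1 + z / 2) = t := by rw [ht]; field_simp; ring
    rw [← e]; gcongr
  set g := τ / (P - 1) with hg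
  have hg0 : 0 < g := by positivity
  have hcub : 1 + τ + τ ^ 2 / 2 + τ ^ 3 / 6 ≤ P := by
    rw [← hPe]
    have := Real.sum_le_exp_of_nonneg hτ0.le 4
    norm_num [Finset.sum_range_succ, Nat.factorial] at this
    linarith
  have hgD : g * (1 + τ / 2 + τ ^ 2 / 6) ≤ 1 := by
    rw [hg, div_mul_eq_mul_div, div_le_one hP1]; nlinarith
  have hpoly := aux_poly τ g hgD hg0 hτ0.le (hτt.trans htle)
  have hg1 : g ≤ 1 := by
    have : 0 ≤ g * (τ / 2 + τ ^ 2 / 6) := by positivity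
    linarith
  have hexpg : Real.exp g ≤ 1 + g + g ^ 2 := by
    have := Real.abs_exp_sub_one_sub_id_le (x := g) (by rw [abs_of_pos hg0]; exact hg1)
    have := (abs_le.1 this).2
    linarith
  have e1 : ((1 + z) ^ (d + 1) - 1) / (P - 1) = (1 + z) * (1 + z / ((1 + z) * (P - 1))) := by
    rw [pow_succ, ← hP]; field_simp; ring
  have hR : (1 + z / ((1 + z) * (P - 1))) ^ d ≤ Real.exp g := by
    refine (aux_pow_upper _ (by positivity) d).trans (Real.exp_le_exp.2 ?_)
    have : (d : ℝ) * (z / ((1 + z) * (P - 1))) = t / (1 + z) / (P - 1) := by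
      rw [ht]; field_simp
    rw [this, hg]
    gcongr
    rw [div_le_iff₀ (by positivity)]
    nlinarith
  have hR1 : 1 ≤ Real.exp g := Real.one_le_exp hg0.le
  set E := Real.exp g with hE
  have hP0 : 0 < P := by linarith
  have hB : t * P / (P - 1) ≤ 45 / 44 * (τ + g) := by
    have : τ + g = τ * P / (P - 1) := by rw [hg]; field_simp; ring
    have h9 : t ≤ 45 / 44 * τ := by nlinarith
    calc t * P / (P - 1) ≤ (45 / 44 * τ) * P / (P - 1) := by gcongr
      _ = 45 / 44 * (τ + g) := by rw [this]; ring
  have hfin : t * P / (P - 1) * E < 5 := by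
    refine lt_of_le_of_lt ?_ hpoly
    exact mul_le_mul hB hexpg (by linarith) (by positivity)
  rw [e1, mul_pow, ← hP]
  have h5 : P * (1 + z / ((1 + z) * (P - 1))) ^ d * (Q - q) ≤ P * E * (Q - q) := by
    have : 0 ≤ Q - q := by linarith
    gcongr
  have h6 : (q - 1) * P ≤ (q - 1) * (P * E) := by
    have : 0 ≤ q - 1 := by linarith
    have : P * 1 ≤ P * E := by gcongr
    nlinarith
  have h7 : Q * (P * E) < (P - 1) / z := by
    rw [lt_div_iff₀ hz]
    rw [div_mul_eq_mul_div, div_lt_iff₀ hP1, ht, hd] at hfin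
    linarith
  have h8 : 0 < P * E := by positivity
  have : (1 + z - 1) = z := by ring
  rw [this]
  linarith

theorem stmt15 (q k d : ℕ) (hq : 4 ≤ q) (heven : Even q) (hk : 2 ≤ k)
    (hd : d = 5 * q ^ k) :
    (∃ xE : ℝ, 1 + 1 / ((q : ℝ) ^ k - q - 1) < xE ∧
      f2 q k d xE (1 + 1 / (2 * ((q : ℝ) ^ k - q - 1))) = 0) ∧
    (∀ xss : ℝ, 1 < xss → h2 q k d xss = 0 →
      1 + 1 / (2 * ((q : ℝ) ^ k - q - 1)) < xss) := by
  have hq' : (4 : ℝ) ≤ q := by exact_mod_cast hq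
  have hQ : (q : ℝ) ^ 2 ≤ (q : ℝ) ^ k := pow_le_pow_right₀ (by linarith) hk
  have hd' : (d : ℝ) = 5 * (q : ℝ) ^ k := by rw [hd]; push_cast; ring
  have hN11 : 11 ≤ (q : ℝ) ^ k - q - 1 := by nlinarith
  constructor
  · have hneg := aux_neg _ q _ d hq' rfl hQ hd' _ _ rfl rfl
    obtain ⟨x1, hx1, hpos⟩ := aux_pos _ q _ d hq' rfl hQ hd' _ rfl
    set N := (q : ℝ) ^ k - q - 1 with hN
    have hle : 1 + 1 / N ≤ x1 := by
      have : 1 / N ≤ 1 := by rw [div_le_one (by linarith)]; linarith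
      linarith
    have hc : ContinuousOn (fun x => f2 q k d x (1 + 1 / (2 * N))) (Set.Icc (1 + 1 / N) x1) := by
      unfold f2
      fun_prop
    obtain ⟨x, hx, hfx⟩ := intermediate_value_Ioo hle hc (show (0:ℝ) ∈ _ from ⟨hneg, hpos⟩)
    exact ⟨x, hx.1, hfx⟩
  · intro x hx1 hx
    by_contra hcon
    push Not at hcon
    have := aux_h2 _ q _ d hq' rfl hQ hd' x hx1 hcon
    unfold h2 at hx
    linarith
end

section
/- Let q ≥ 4 be an even integer, k ≥ 2 an integer, and d = 5q^k. Then there exist reals x and y with x > y > 1 + 1/(2(q^k − q − 1)) such that f1(x, y) = 0 and f2(x, y) = 0. -/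
/-- `f1(x,y) = (x−1)·[(1 + x^d(y−1)/(x^d−1))^d·(q^k−q) + q − y^d] − y^d + 1`. -/
noncomputable def f1 (q k d : ℕ) (x y : ℝ) : ℝ :=
  (x - 1) * ((1 + x ^ d * (y - 1) / (x ^ d - 1)) ^ d * ((q : ℝ) ^ k - q)
    + (q : ℝ) - y ^ d) - y ^ d + 1

open Set Filter Topology in
theorem abs_lemma (L H : ℝ) (hLH : L < H) (f g : ℝ → ℝ → ℝ)
    (hf : ContinuousOn (fun p : ℝ × ℝ => f p.1 p.2) (Icc L H ×ˢ Icc L H))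
    (hg : ContinuousOn (fun p : ℝ × ℝ => g p.1 p.2) (Icc L H ×ˢ Icc L H))
    (hmono : ∀ x ∈ Icc L H, StrictMonoOn (g x) (Icc L H))
    (hgL : ∀ x ∈ Icc L H, g x L < 0) (hgH : ∀ x ∈ Icc L H, 0 < g x H)
    (hfH : ∀ y ∈ Icc L H, 0 < f H y)
    (hfg : ∀ s ∈ Icc L H, f s s < g s s) :
    ∃ x y : ℝ, y < x ∧ L < y ∧ f x y = 0 ∧ g x y = 0 := by
  have hLm : L ∈ Icc L H := ⟨le_rfl, hLH.le⟩
  have hHm : H ∈ Icc L H := ⟨hLH.le, le_rfl⟩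
  have gx : ∀ y ∈ Icc L H, ContinuousOn (fun x => g x y) (Icc L H) := fun y hy =>
    hg.comp (f := fun x => (x, y)) (by fun_prop) (fun x hx => ⟨hx, hy⟩)
  have gy : ∀ x ∈ Icc L H, ContinuousOn (fun y => g x y) (Icc L H) := fun x hx =>
    hg.comp (f := fun y => (x, y)) (by fun_prop) (fun y hy => ⟨hx, hy⟩)
  have hex : ∀ x, ∃ y, x ∈ Icc L H → (L < y ∧ y < H ∧ g x y = 0) := by
    intro x
    by_cases hx : x ∈ Icc L H
    · obtain ⟨y, hy, h0⟩ := intermediate_value_Icc hLH.le (gy x hx)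
        (⟨(hgL x hx).le, (hgH x hx).le⟩ : (0:ℝ) ∈ Icc (g x L) (g x H))
      refine ⟨y, fun _ => ⟨lt_of_le_of_ne hy.1 ?_, lt_of_le_of_ne hy.2 ?_, h0⟩⟩
      · rintro rfl; exact absurd h0 (hgL x hx).ne
      · rintro rfl; exact absurd h0 (hgH x hx).ne'
    · exact ⟨0, fun h => absurd h hx⟩
  choose Y hY using hex
  have hYm : ∀ x ∈ Icc L H, Y x ∈ Icc L H := fun x hx => ⟨(hY x hx).1.le, (hY x hx).2.1.le⟩
  have hYc : ContinuousOn Y (Icc L H) := by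
    intro x0 hx0
    obtain ⟨h1, h2, h3⟩ := hY x0 hx0
    refine tendsto_order.2 ⟨fun a ha => ?_, fun b hb => ?_⟩
    · have hm : max a L ∈ Icc L H := ⟨le_max_right _ _, (max_lt ha h1).le.trans h2.le⟩
      have hneg : g x0 (max a L) < 0 := by
        rw [← h3]; exact hmono x0 hx0 hm (hYm x0 hx0) (max_lt ha h1)
      filter_upwards [(gx _ hm x0 hx0).eventually_lt_const hneg, self_mem_nhdsWithin] with x hx hxm
      rw [← (hY x hxm).2.2] at hx
      exact (le_max_left _ _).trans_lt (((hmono x hxm).lt_iff_lt hm (hYm x hxm)).1 hx)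
    · have hm : min b H ∈ Icc L H := ⟨h1.le.trans (lt_min hb h2).le, min_le_right _ _⟩
      have hpos : 0 < g x0 (min b H) := by
        rw [← h3]; exact hmono x0 hx0 (hYm x0 hx0) hm (lt_min hb h2)
      filter_upwards [(gx _ hm x0 hx0).eventually_const_lt hpos, self_mem_nhdsWithin] with x hx hxm
      rw [← (hY x hxm).2.2] at hx
      exact (((hmono x hxm).lt_iff_lt (hYm x hxm) hm).1 hx).trans_le (min_le_left _ _)
  have hpc : ContinuousOn (fun x => Y x - x) (Icc L H) := hYc.sub continuousOn_id
  have hhc : ContinuousOn (fun x => f x (Y x)) (Icc L H) :=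
    hf.comp (f := fun x => (x, Y x)) (continuousOn_id.prodMk hYc) (fun x hx => ⟨hx, hYm x hx⟩)
  have hScl : IsCompact (Icc L H ∩ (fun x => Y x - x) ⁻¹' Ici 0) :=
    isCompact_Icc.of_isClosed_subset (hpc.preimage_isClosed_of_isClosed isClosed_Icc isClosed_Ici)
      inter_subset_left
  obtain ⟨m, ⟨hmI, hmS⟩, hmax⟩ := hScl.exists_isGreatest
    ⟨L, hLm, by have := (hY L hLm).1; simp only [mem_preimage, mem_Ici]; linarith⟩
  have hsub : Icc m H ⊆ Icc L H := Icc_subset_Icc_left hmI.1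
  have hm0 : Y m = m := by
    have hYH := (hY H hHm).2.1
    obtain ⟨z, hz, hz0⟩ := intermediate_value_Icc' hmI.2 (hpc.mono hsub)
      (⟨by linarith, hmS⟩ : (0:ℝ) ∈ Icc (Y H - H) (Y m - m))
    have : z ≤ m := hmax ⟨hsub hz, by simp only [mem_preimage, mem_Ici]; exact hz0.ge⟩
    have : z = m := le_antisymm this hz.1
    subst this
    simp only at hz0
    linarith
  have hneg : f m (Y m) < 0 := by
    rw [hm0]
    have := (hY m hmI).2.2
    rw [hm0] at this
    rw [← this]; exact hfg m hmI
  obtain ⟨x, hx, hx0⟩ := intermediate_value_Icc hmI.2 (hhc.mono hsub)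
      (⟨hneg.le, (hfH _ (hYm H hHm)).le⟩ : (0:ℝ) ∈ Icc (f m (Y m)) (f H (Y H)))
  have hxm : m < x := lt_of_le_of_ne hx.1 (by rintro rfl; exact absurd hx0 hneg.ne)
  refine ⟨x, Y x, ?_, (hY x (hsub hx)).1, hx0, (hY x (hsub hx)).2.2⟩
  by_contra hcon
  push Not at hcon
  have : x ≤ m := hmax ⟨hsub hx, by simp only [mem_preimage, mem_Ici]; linarith⟩
  linarith

theorem exp3 : (20.08:ℝ) ≤ Real.exp 3 := by
  have h := Real.exp_one_gt_d9
  have : Real.exp 3 = Real.exp 1 ^ 3 := by rw [← Real.exp_nat_mul]; norm_num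
  rw [this]
  calc (20.08:ℝ) ≤ 2.7182818283 ^ 3 := by norm_num
    _ ≤ _ := by gcongr

theorem exp_low (w t : ℝ) (ht : 0 ≤ t) (hw : 3 + t ≤ w) :
    20.08 * (1 + t + t ^ 2 / 2) ≤ Real.exp w := by
  calc 20.08 * (1 + t + t ^ 2 / 2) ≤ Real.exp 3 * Real.exp t := by
        gcongr
        · exact exp3
        · exact Real.quadratic_le_exp_of_nonneg ht
    _ = Real.exp (3 + t) := (Real.exp_add _ _).symm
    _ ≤ _ := Real.exp_le_exp.2 hw

theorem pow_low (d : ℕ) (y : ℝ) (hy : 1 < y) : Real.exp (d * (y - 1) / y) ≤ y ^ d := by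
  have h : 1 - y⁻¹ ≤ Real.log y := Real.one_sub_inv_le_log_of_pos (by linarith)
  have h2 : (d:ℝ) * (y - 1) / y = d * (1 - y⁻¹) := by field_simp
  rw [h2, Real.exp_nat_mul]
  gcongr
  calc Real.exp (1 - y⁻¹) ≤ Real.exp (Real.log y) := Real.exp_le_exp.2 h
    _ = y := Real.exp_log (by linarith)

theorem key_ineq (d : ℕ) (M y : ℝ) (hM : 11 ≤ M) (hd : 5 * M + 25 ≤ d)
    (hy : 1 + 0.6 / M ≤ y) : (d:ℝ) ^ 2 * (y - 1) * y ^ (d - 1) ≤ M * (y ^ d - 1) ^ 2 := by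
  have hM0 : 0 < M := by linarith
  have hMy : 0.6 ≤ M * (y - 1) := by
    have : 0.6 / M ≤ y - 1 := by linarith
    rw [div_le_iff₀ hM0] at this; linarith
  have hy1 : 1 < y := by
    have : 0 < 0.6 / M := by positivity
    linarith
  have hd0 : (0:ℝ) < d := by linarith
  have hw := pow_low d y hy1
  set w := (d:ℝ) * (y - 1) / y with hwdef
  have hwy : w * y = d * (y - 1) := by rw [hwdef]; field_simp
  have hyM : y ≤ 1.76 * (M * (y - 1)) := by nlinarith
  have hdM : (d:ℝ) ≤ 1.76 * w * M := by
    have : (d:ℝ) * y ≤ (1.76 * w * M) * y := by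
      calc (d:ℝ) * y ≤ d * (1.76 * (M * (y - 1))) := by gcongr
        _ = 1.76 * M * (d * (y - 1)) := by ring
        _ = _ := by rw [← hwy]; ring
    exact le_of_mul_le_mul_right this (by linarith)
  have hw3 : 3 ≤ w := by
    rw [hwdef, le_div_iff₀ (by linarith)]
    nlinarith
  have he := exp_low w (w - 3) (by linarith) (by linarith)
  have hP : 2 + 1.76 * w ^ 2 ≤ y ^ d := by nlinarith
  have hdpos : d ≠ 0 := by rintro rfl; simp at hd0
  have hyd : y ^ d = y ^ (d - 1) * y := by rw [← pow_succ, Nat.sub_add_cancel (by omega)]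
  have hlhs : (d:ℝ) ^ 2 * (y - 1) * y ^ (d - 1) = d * w * y ^ d := by
    rw [hyd]
    calc _ = d * (d * (y - 1)) * y ^ (d - 1) := by ring
      _ = d * (w * y) * y ^ (d - 1) := by rw [hwy]
      _ = _ := by ring
  rw [hlhs]
  set P := y ^ d
  have hw0 : 0 < w := by linarith
  have hP0 : 0 < P := by nlinarith
  calc (d:ℝ) * w * P ≤ (1.76 * w * M) * w * P := by gcongr
    _ = M * ((1.76 * w ^ 2) * P) := by ring
    _ ≤ M * (P - 1) ^ 2 := by
      gcongr
      nlinarith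

theorem f2_alt (d : ℕ) (x y : ℝ) (hy : 1 < y) (hd : d ≠ 0) :
    1 + y ^ d * (x - 1) / (y ^ d - 1) = (x * y ^ d - 1) / (y ^ d - 1) := by
  have : 1 < y ^ d := one_lt_pow₀ hy hd
  have : y ^ d - 1 ≠ 0 := by linarith
  field_simp
  ring

theorem mono_B (d : ℕ) (M x : ℝ) (hM : 11 ≤ M) (hd : 5 * M + 25 ≤ d)
    (hx1 : 1 < x) (hx : x ≤ 1 + 1 / M) :
    MonotoneOn (fun y : ℝ => (y - 1) * (1 + y ^ d * (x - 1) / (y ^ d - 1)) ^ d)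
      (Set.Ici (1 + 0.6 / M)) := by
  have hM0 : 0 < M := by linarith
  have hd0 : (0:ℝ) < d := by linarith
  have hdn : d ≠ 0 := by rintro rfl; simp at hd0
  have hL : 0 < 0.6 / M := by positivity
  have hy1 : ∀ y ∈ Set.Ici (1 + 0.6 / M), 1 < y := fun y hy => by
    have : 1 + 0.6 / M ≤ y := hy
    linarith
  have hK : MonotoneOn (fun y : ℝ => Real.log (y - 1) +
      d * (Real.log (x * y ^ d - 1) - Real.log (y ^ d - 1))) (Set.Ici (1 + 0.6 / M)) := by
    have hder : ∀ y ∈ Set.Ici (1 + 0.6 / M), HasDerivAt (fun y : ℝ => Real.log (y - 1) +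
      d * (Real.log (x * y ^ d - 1) - Real.log (y ^ d - 1)))
      (1 / (y - 1) + d * ((x * (d * y ^ (d - 1))) / (x * y ^ d - 1)
        - (d * y ^ (d - 1)) / (y ^ d - 1))) y := by
      intro y hy
      have h1 := hy1 y hy
      have hP : 1 < y ^ d := one_lt_pow₀ h1 hdn
      have hxP : 0 < x * y ^ d - 1 := by nlinarith
      have hpow := hasDerivAt_pow d y
      exact (((hasDerivAt_id y).sub_const 1).log (by simp; linarith)).add
        ((((hpow.const_mul x).sub_const 1).log hxP.ne').sub
          ((hpow.sub_const 1).log (by linarith)) |>.const_mul (d:ℝ))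
    apply monotoneOn_of_deriv_nonneg (convex_Ici _)
    · exact fun y hy => (hder y hy).continuousAt.continuousWithinAt
    · exact fun y hy => (hder y (interior_subset hy)).differentiableAt.differentiableWithinAt
    · intro y hy
      have hy := interior_subset hy
      rw [(hder y hy).deriv]
      have h1 := hy1 y hy
      have hk := key_ineq d M y hM hd hy
      have hP : 1 < y ^ d := one_lt_pow₀ h1 hdn
      have hxP : 0 < x * y ^ d - 1 := by nlinarith
      have hR : 0 < y ^ (d - 1) := by positivity
      set P := y ^ d
      set R := y ^ (d - 1)
      have e : 1 / (y - 1) + d * ((x * (d * R)) / (x * P - 1) - (d * R) / (P - 1))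
          = ((x * P - 1) * (P - 1) - (x - 1) * (d ^ 2 * (y - 1) * R))
            / ((y - 1) * (x * P - 1) * (P - 1)) := by
        have : y - 1 ≠ 0 := by linarith
        have : P - 1 ≠ 0 := by linarith
        field_simp
        ring
      rw [e]
      have hxM : (x - 1) * M ≤ 1 := by
        have : x - 1 ≤ 1 / M := by linarith
        rwa [le_div_iff₀ hM0] at this
      apply div_nonneg _ (by have : 0 < y - 1 := by linarith
                             have : 0 < P - 1 := by linarith
                             positivity)
      have a1 : (x - 1) * (d ^ 2 * (y - 1) * R) ≤ (x - 1) * (M * (P - 1) ^ 2) :=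
        mul_le_mul_of_nonneg_left hk (by linarith)
      have a2 : ((x - 1) * M) * (P - 1) ^ 2 ≤ 1 * (P - 1) ^ 2 :=
        mul_le_mul_of_nonneg_right hxM (by positivity)
      nlinarith
  intro a ha b hb hab
  have hexp : ∀ y ∈ Set.Ici (1 + 0.6 / M), (y - 1) * (1 + y ^ d * (x - 1) / (y ^ d - 1)) ^ d
      = Real.exp (Real.log (y - 1) +
      d * (Real.log (x * y ^ d - 1) - Real.log (y ^ d - 1))) := by
    intro y hy
    have h1 := hy1 y hy
    have hP : 1 < y ^ d := one_lt_pow₀ h1 hdn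
    have hxP : 0 < x * y ^ d - 1 := by nlinarith
    rw [f2_alt d x y h1 hdn, Real.exp_add, Real.exp_log (by linarith), Real.exp_nat_mul,
      Real.exp_sub, Real.exp_log hxP, Real.exp_log (by linarith)]
  simp only
  rw [hexp a ha, hexp b hb]
  exact Real.exp_le_exp.2 (hK ha hb hab)

/-- numeric core -/
theorem num_core (N q P z E t1 P1 : ℝ) (hN : 12 ≤ N) (hQ : N + q ≤ t1 * N) (ht1 : 1 ≤ t1)
    (hP1 : 1 < P1) (hP : P1 ≤ P) (hz : z * (P - 1) * N ≤ 5 * (N + q)) (hz0 : 0 ≤ z)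
    (hE : E ≤ 1 + z + z ^ 2)
    (hnum : 0.6 * (t1 + (t1 - 1) / 11 +
      12 / 11 * (5 * t1 / (P1 - 1) + (5 * t1 / (P1 - 1)) ^ 2)) < 1 - 1 / P1) :
    0.6 / (N - 1) * (N * E + (q - 1)) < 1 - 1 / P := by
  have hzz : z ≤ 5 * t1 / (P1 - 1) := by
    rw [le_div_iff₀ (by linarith)]
    have h1 : z * (P1 - 1) ≤ z * (P - 1) := mul_le_mul_of_nonneg_left (by linarith) hz0
    have h2 : z * (P - 1) * N ≤ (5 * t1) * N := by linarith
    exact h1.trans (le_of_mul_le_mul_right h2 (by linarith))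
  set Z := 5 * t1 / (P1 - 1)
  have hE2 : E - 1 ≤ Z + Z ^ 2 := by nlinarith
  have hPP : 1 / P ≤ 1 / P1 := one_div_le_one_div_of_le (by linarith) hP
  have : (N * E + (q - 1)) / (N - 1) ≤ t1 + (t1 - 1) / 11 + 12 / 11 * (Z + Z ^ 2) := by
    rw [div_le_iff₀ (by linarith)]
    have hZ : 0 ≤ Z + Z ^ 2 := by
      have : 0 ≤ Z := hz0.trans hzz
      positivity
    have : N * (E - 1) ≤ N * (Z + Z ^ 2) := mul_le_mul_of_nonneg_left hE2 (by linarith)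
    nlinarith
  calc 0.6 / (N - 1) * (N * E + (q - 1)) = 0.6 * ((N * E + (q - 1)) / (N - 1)) := by ring
    _ ≤ 0.6 * (t1 + (t1 - 1) / 11 + 12 / 11 * (Z + Z ^ 2)) := by gcongr
    _ < 1 - 1 / P := by linarith

theorem f2_neg (d : ℕ) (N q x : ℝ) (hq : 4 ≤ q) (hN : 3 * q ≤ N) (hd : (d:ℝ) = 5 * (N + q))
    (hxL : 1 + 0.6 / (N - 1) ≤ x) (hxH : x ≤ 1 + 1 / (N - 1)) :
    (1 + 0.6 / (N - 1) - 1) * ((1 + (1 + 0.6 / (N - 1)) ^ d * (x - 1) /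
      ((1 + 0.6 / (N - 1)) ^ d - 1)) ^ d * N + (q - 1) * x ^ d) - x ^ d + 1 < 0 := by
  have hN12 : 12 ≤ N := by linarith
  have hM0 : 0 < N - 1 := by linarith
  have hL0 : 0 < 0.6 / (N - 1) := by positivity
  set L := 1 + 0.6 / (N - 1) with hLdef
  have hL1 : 1 < L := by linarith
  have hd0 : (0:ℝ) < d := by linarith
  have hdn : d ≠ 0 := by rintro rfl; simp at hd0
  have hlow := pow_low d L hL1
  have hw : (d:ℝ) * (L - 1) / L = 3 * (N + q) / (N - 0.4) := by
    have : N - 0.4 ≠ 0 := by linarith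
    have e : L = (N - 0.4) / (N - 1) := by rw [hLdef]; field_simp; ring
    have e2 : L - 1 = 0.6 / (N - 1) := by rw [hLdef]; ring
    rw [e2, e, hd]; field_simp; ring
  rw [hw] at hlow
  have hxP : L ^ d ≤ x ^ d := by gcongr
  have hPgt : 1 < L ^ d := one_lt_pow₀ hL1 hdn
  have hx0 : 0 < x := by linarith
  rw [f2_alt d x L hL1 hdn]
  have hlow2 : ∀ t : ℝ, 0 ≤ t → (1 + t / 3) * N ≤ N + q →
      20.08 * (1 + t + t ^ 2 / 2) ≤ L ^ d := by
    intro t ht h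
    refine (exp_low _ t ht ?_).trans hlow
    rw [le_div_iff₀ (by linarith)]
    nlinarith
  set P := L ^ d
  have hX : 0 < x ^ d := by positivity
  -- B = x * (1 + c/(P-1))
  set z := (d:ℝ) * ((x - 1) / x / (P - 1)) with hz
  have hB : ((x * P - 1) / (P - 1)) ^ d ≤ x ^ d * Real.exp z := by
    rw [hz, Real.exp_nat_mul, ← mul_pow]
    have hP1 : 0 < P - 1 := by linarith
    have e : (x * P - 1) / (P - 1) = x * ((x - 1) / x / (P - 1) + 1) := by
      field_simp; ring
    have : 0 ≤ (x - 1) / x / (P - 1) := by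
      have : 0 ≤ x - 1 := by linarith
      positivity
    rw [e]
    gcongr
    exact Real.add_one_le_exp _
  have hz0 : 0 ≤ z := by
    have : 0 ≤ x - 1 := by linarith
    have : 0 < P - 1 := by linarith
    positivity
  have hzN : z * (P - 1) * N ≤ 5 * (N + q) := by
    have hc : (x - 1) / x * N ≤ 1 := by
      rw [div_mul_eq_mul_div, div_le_one hx0]
      have : x - 1 ≤ 1 / (N - 1) := by linarith
      rw [le_div_iff₀ hM0] at this
      linarith
    have : z * (P - 1) * N = d * ((x - 1) / x * N) := by
      have : P - 1 ≠ 0 := by linarith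
      rw [hz]; field_simp
    rw [this, ← hd]
    nlinarith
  have hP20 : 20.08 ≤ P := by
    have := hlow2 0 le_rfl (by linarith)
    linarith
  have hz1 : z ≤ 1 := by
    have h2 : z * (P - 1) * N ≤ (20 / 3) * N := by linarith
    have h3 : z * (P - 1) ≤ 20 / 3 := le_of_mul_le_mul_right h2 (by linarith)
    nlinarith
  have hE : Real.exp z ≤ 1 + z + z ^ 2 := by
    have := Real.abs_exp_sub_one_sub_id_le (x := z) (by rw [abs_of_nonneg hz0]; exact hz1)
    have := (abs_le.1 this).2
    linarith
  have core : 0.6 / (N - 1) * (N * Real.exp z + (q - 1)) < 1 - 1 / P := by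
    by_cases c1 : N + q ≤ 1.1 * N
    · exact num_core N q P z _ 1.1 20 hN12 c1 (by norm_num) (by norm_num) (by linarith) hzN hz0 hE
        (by norm_num)
    by_cases c2 : N + q ≤ 1.2 * N
    · have := hlow2 0.3 (by norm_num) (by linarith)
      exact num_core N q P z _ 1.2 27 hN12 c2 (by norm_num) (by norm_num) (by linarith) hzN hz0 hE
        (by norm_num)
    · have := hlow2 0.6 (by norm_num) (by linarith)
      exact num_core N q P z _ (4/3) 35.7 hN12 (by linarith) (by norm_num) (by norm_num)
        (by linarith) hzN hz0 hE (by norm_num)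
  have hLL : L - 1 = 0.6 / (N - 1) := by rw [hLdef]; ring
  rw [hLL]
  have s1 : 0.6 / (N - 1) * (((x * P - 1) / (P - 1)) ^ d * N + (q - 1) * x ^ d)
      ≤ 0.6 / (N - 1) * ((x ^ d * Real.exp z) * N + (q - 1) * x ^ d) := by
    gcongr
  have s2 : 0.6 / (N - 1) * ((x ^ d * Real.exp z) * N + (q - 1) * x ^ d)
      = x ^ d * (0.6 / (N - 1) * (N * Real.exp z + (q - 1))) := by ring
  have s3 := mul_lt_mul_of_pos_left core hX
  have s4 : 1 ≤ x ^ d * (1 / P) := by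
    rw [mul_one_div, le_div_iff₀ (by linarith)]; linarith
  linarith

theorem B_ge (d : ℕ) (x y : ℝ) (hx : 1 < x) (hy : 1 < y) (hdn : d ≠ 0) :
    x ≤ 1 + y ^ d * (x - 1) / (y ^ d - 1) := by
  have hP : 1 < y ^ d := one_lt_pow₀ hy hdn
  have : x - 1 ≤ y ^ d * (x - 1) / (y ^ d - 1) := by
    rw [le_div_iff₀ (by linarith)]
    nlinarith
  linarith

theorem stmt16 (q k d : ℕ) (hq : 4 ≤ q) (heven : Even q) (hk : 2 ≤ k)
    (hd : d = 5 * q ^ k) :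
    ∃ x y : ℝ, y < x ∧ 1 + 1 / (2 * ((q : ℝ) ^ k - q - 1)) < y ∧
      f1 q k d x y = 0 ∧ f2 q k d x y = 0 := by
  have hq4 : (4:ℝ) ≤ q := by exact_mod_cast hq
  have hQ : (q:ℝ) ^ 2 ≤ (q:ℝ) ^ k := pow_le_pow_right₀ (by linarith) hk
  have hdR : (d:ℝ) = 5 * (q:ℝ) ^ k := by rw [hd]; push_cast; ring
  unfold f1 f2
  set N : ℝ := (q:ℝ) ^ k - q with hN
  have hN3 : 3 * (q:ℝ) ≤ N := by nlinarith
  have hdN : (d:ℝ) = 5 * (N + q) := by rw [hdR, hN]; ring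
  clear_value N
  have hM0 : 0 < N - 1 := by linarith
  have hdn : d ≠ 0 := by rintro rfl; simp at hdN; linarith
  have hL0 : 0 < 0.6 / (N - 1) := by positivity
  have hLH : 1 + 0.6 / (N - 1) < 1 + 1 / (N - 1) := by
    gcongr; norm_num
  have h1 : ∀ s ∈ Set.Icc (1 + 0.6 / (N - 1)) (1 + 1 / (N - 1)), 1 < s := fun s hs => by
    linarith [hs.1]
  have hpne : ∀ s ∈ Set.Icc (1 + 0.6 / (N - 1)) (1 + 1 / (N - 1)), s ^ d - 1 ≠ 0 := fun s hs => by
    have := one_lt_pow₀ (h1 s hs) hdn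
    linarith
  obtain ⟨x, y, hxy, hLy, e1, e2⟩ := abs_lemma (1 + 0.6 / (N - 1)) (1 + 1 / (N - 1)) hLH
    (fun x y => (x - 1) * ((1 + x ^ d * (y - 1) / (x ^ d - 1)) ^ d * N
      + (q : ℝ) - y ^ d) - y ^ d + 1)
    (fun x y => (y - 1) * ((1 + y ^ d * (x - 1) / (y ^ d - 1)) ^ d * N
      + ((q : ℝ) - 1) * x ^ d) - x ^ d + 1)
    (by
      have : ∀ p ∈ Set.Icc (1 + 0.6 / (N - 1)) (1 + 1 / (N - 1)) ×ˢ
        Set.Icc (1 + 0.6 / (N - 1)) (1 + 1 / (N - 1)), p.1 ^ d - 1 ≠ 0 := fun p hp => hpne _ hp.1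
      fun_prop (disch := assumption))
    (by
      have : ∀ p ∈ Set.Icc (1 + 0.6 / (N - 1)) (1 + 1 / (N - 1)) ×ˢ
        Set.Icc (1 + 0.6 / (N - 1)) (1 + 1 / (N - 1)), p.2 ^ d - 1 ≠ 0 := fun p hp => hpne _ hp.2
      fun_prop (disch := assumption))
    (by
      intro x hx a ha b hb hab
      have hm := mono_B d (N - 1) x (by linarith) (by linarith) (h1 x hx) hx.2 ha.1 hb.1 hab.le
      simp only at hm ⊢
      have hm2 := mul_le_mul_of_nonneg_right hm (show 0 ≤ N by linarith)
      have hX : 0 < ((q:ℝ) - 1) * x ^ d := by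
        have := h1 x hx
        have : 0 < (q:ℝ) - 1 := by linarith
        positivity
      have := mul_lt_mul_of_pos_right hab hX
      linarith)
    (fun x hx => f2_neg d N q x hq4 hN3 hdN hx.1 hx.2)
    (by
      intro x hx
      have hx1 := h1 x hx
      have hH1 : 1 < 1 + 1 / (N - 1) := by linarith
      have hB := B_ge d x _ hx1 hH1 hdn
      set B := 1 + (1 + 1 / (N - 1)) ^ d * (x - 1) / ((1 + 1 / (N - 1)) ^ d - 1)
      have hBd : x ^ d ≤ B ^ d := by gcongr
      have hX : 0 < x ^ d := by positivity
      have e : (1 + 1 / (N - 1) - 1) * (N - 1) = 1 := by field_simp; ring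
      have : (1 + 1 / (N - 1) - 1) * ((N - 1) * x ^ d) ≤
          (1 + 1 / (N - 1) - 1) * (B ^ d * N + (q - 1) * x ^ d) := by
        apply mul_le_mul_of_nonneg_left _ (by linarith)
        nlinarith
      rw [← mul_assoc, e] at this
      linarith)
    (by
      intro y hy
      have hy1 := h1 y hy
      have hH1 : 1 < 1 + 1 / (N - 1) := by linarith
      have hA : y ≤ 1 + (1 + 1 / (N - 1)) ^ d * (y - 1) / ((1 + 1 / (N - 1)) ^ d - 1) :=
        B_ge d y _ hy1 hH1 hdn
      set A := 1 + (1 + 1 / (N - 1)) ^ d * (y - 1) / ((1 + 1 / (N - 1)) ^ d - 1)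
      have hAd : y ^ d ≤ A ^ d := by gcongr
      have hX : 0 < y ^ d := by positivity
      have e : (1 + 1 / (N - 1) - 1) * (N - 1) = 1 := by field_simp; ring
      have : (1 + 1 / (N - 1) - 1) * ((N - 1) * y ^ d) ≤
          (1 + 1 / (N - 1) - 1) * (A ^ d * N + q - y ^ d) := by
        apply mul_le_mul_of_nonneg_left _ (by linarith)
        nlinarith
      rw [← mul_assoc, e] at this
      linarith)
    (by
      intro s hs
      have hs1 := h1 s hs
      have hP := one_lt_pow₀ hs1 hdn
      have : 0 < (s - 1) * (q * (s ^ d - 1)) := by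
        apply mul_pos (by linarith)
        apply mul_pos <;> linarith
      nlinarith)
  refine ⟨x, y, hxy, lt_trans ?_ hLy, e1, e2⟩
  have : 1 / (2 * (N - 1)) = 0.5 / (N - 1) := by field_simp; norm_num
  rw [this]
  gcongr
  norm_num
end
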